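/- arXiv:1908.05456 — 5 statements merged into one kernel-verified Lean document; each statement's English description precedes it below -/
import Mathlib

section
/- Let G = C_2 ∗ C_3, let G'' denote the second derived subgroup of G (the derived subgroup of the derived subgroup), and let H = PSL(2,5) × (G/G''). Then H is infinite, H is a homomorphic image of G (there is a surjective group homomorphism G → H), and there exists a generating pair (h1,h2) of H such that for every group homomorphism θ : G → H and every generating pair (g1,g2) of G one has (θ(g1), θ(g2)) ≠ (h1,h2). -/
instance : Fact (Nat.Prime 5) := ⟨by norm_num⟩

instance (G : Type) [Group G] (n : ℕ) : (derivedSeries G n).Normal :=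
  derivedSeries_normal G n

/-- `SL(2,F)` -/
abbrev SL2 (F : Type) [Field F] : Type := Matrix.SpecialLinearGroup (Fin 2) F

/-- `PSL(2,F)`, the quotient of `SL(2,F)` by its centre `{±I}`. -/
abbrev PSL2 (F : Type) [Field F] : Type := SL2 F ⧸ Subgroup.center (SL2 F)

/-- The cyclic group of order `m`. -/
abbrev Cyc (m : ℕ) : Type := Multiplicative (ZMod m)

/-- `G = C_2 ∗ C_3`. -/
abbrev G0 : Type := Monoid.Coprod (Cyc 2) (Cyc 3)

/-- `H = PSL(2,5) × G/G''`, where `G''` is the second derived subgroup of `G`. -/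
abbrev H0 : Type := PSL2 (ZMod 5) × (G0 ⧸ derivedSeries G0 2)


open Matrix

namespace Pf

/-- generator of order two -/
def ga : G0 := Monoid.Coprod.inl (Multiplicative.ofAdd (1 : ZMod 2))
/-- generator of order three -/
def gb : G0 := Monoid.Coprod.inr (Multiplicative.ofAdd (1 : ZMod 3))

theorem closure_gen (g : G0) : g ∈ Subgroup.closure {ga, gb} := by
  have ha : ga ∈ Subgroup.closure {ga, gb} := Subgroup.subset_closure (by simp)
  have hb : gb ∈ Subgroup.closure {ga, gb} := Subgroup.subset_closure (by simp)
  induction g using Monoid.Coprod.induction_on with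
  | inl m =>
    have : m = (Multiplicative.ofAdd (1 : ZMod 2)) ^ (Multiplicative.toAdd m).val := by
      revert m; decide
    rw [this, map_pow]
    exact Subgroup.pow_mem _ ha _
  | inr m =>
    have : m = (Multiplicative.ofAdd (1 : ZMod 3)) ^ (Multiplicative.toAdd m).val := by
      revert m; decide
    rw [this, map_pow]
    exact Subgroup.pow_mem _ hb _
  | mul x y hx hy => exact Subgroup.mul_mem _ hx hy

theorem closure_top : Subgroup.closure {ga, gb} = ⊤ :=
  (Subgroup.eq_top_iff' _).2 closure_gen

theorem ga_sq : ga ^ 2 = 1 := by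
  have : (Multiplicative.ofAdd (1 : ZMod 2)) ^ 2 = 1 := by decide
  rw [ga, ← map_pow, this, map_one]

theorem gb_cube : gb ^ 3 = 1 := by
  have : (Multiplicative.ofAdd (1 : ZMod 3)) ^ 3 = 1 := by decide
  rw [gb, ← map_pow, this, map_one]

theorem cyc_hom {K : Type*} [Group K] (n : ℕ) (k : K) (h : k ^ n = 1) :
    ∃ f : Cyc n →* K, f (Multiplicative.ofAdd 1) = k := by
  let f : {f : ℤ →+ Additive K // f n = 0} :=
    ⟨zmultiplesHom (Additive K) (Additive.ofMul k), by
      simp only [zmultiplesHom_apply, natCast_zsmul]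
      rw [← ofMul_pow, h, ofMul_one]⟩
  refine ⟨AddMonoidHom.toMultiplicativeLeft (ZMod.lift n f), ?_⟩
  have : ZMod.lift n f ((1 : ℤ) : ZMod n) = f.1 1 := ZMod.lift_coe n f 1
  simp only [Int.cast_one] at this
  change Additive.toMul (ZMod.lift n f 1) = k
  rw [this]
  simp [f]

theorem G_hom {K : Type*} [Group K] (k l : K) (hk : k ^ 2 = 1) (hl : l ^ 3 = 1) :
    ∃ f : G0 →* K, f ga = k ∧ f gb = l := by
  obtain ⟨f, hf⟩ := cyc_hom 2 k hk
  obtain ⟨g, hg⟩ := cyc_hom 3 l hl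
  exact ⟨Monoid.Coprod.lift f g, by simp [ga, hf], by simp [gb, hg]⟩

theorem G_ext {K : Type*} [Group K] (f f' : G0 →* K) (h1 : f ga = f' ga) (h2 : f gb = f' gb) :
    f = f' := by
  refine MonoidHom.eq_of_eqOn_dense closure_top ?_
  intro x hx
  rcases hx with rfl | rfl
  · exact h1
  · exact h2

/-! ### Infinite -/

/-- affine action -/
noncomputable def act : ℂˣ →* MulAut (Multiplicative ℂ) :=
  (MulAutMultiplicative ℂ).symm.toMonoidHom.comp (DistribMulAction.toAddAut ℂˣ ℂ)

theorem act_apply (u : ℂˣ) (z : Multiplicative ℂ) :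
    act u z = Multiplicative.ofAdd ((u : ℂ) * Multiplicative.toAdd z) := rfl

theorem inf_Q : Infinite (G0 ⧸ derivedSeries G0 2) := by
  by_contra hfin
  rw [not_infinite_iff_finite] at hfin
  obtain ⟨w, hw⟩ : ∃ w : ℂ, 1 + w + w ^ 2 = 0 := by
    have h := (Complex.isPrimitiveRoot_exp 3 (by norm_num)).geom_sum_eq_zero (by norm_num)
    exact ⟨_, by simpa only [Finset.sum_range_succ, Finset.sum_range_zero, zero_add, pow_zero,
      pow_one] using h⟩
  have hw3 : w ^ 3 = 1 := by linear_combination (w - 1) * hw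
  let u : ℂˣ := Units.mkOfMulEqOne w (w ^ 2) (by rw [← hw3]; ring)
  have hu : (u : ℂ) = w := rfl
  let A : Multiplicative ℂ ⋊[act] ℂˣ := ⟨1, -1⟩
  let B : Multiplicative ℂ ⋊[act] ℂˣ := ⟨Multiplicative.ofAdd 1, u⟩
  have hA : A ^ 2 = 1 := by
    ext <;> simp [A, pow_two]
  have hB : B ^ 3 = 1 := by
    apply SemidirectProduct.ext
    · apply Multiplicative.toAdd.injective
      simp only [B, pow_succ, pow_zero, one_mul, SemidirectProduct.mul_left,
        SemidirectProduct.mul_right, act_apply, toAdd_mul, toAdd_ofAdd, SemidirectProduct.one_left,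
        toAdd_one]
      simp only [Units.val_mul, hu]
      linear_combination hw
    · apply Units.ext
      simp only [B, pow_succ, pow_zero, one_mul, SemidirectProduct.mul_right, Units.val_mul, hu,
        SemidirectProduct.one_right, Units.val_one]
      linear_combination hw3
  obtain ⟨f, hfa, hfb⟩ := G_hom A B hA hB
  have hc : f (ga * gb * ga⁻¹ * gb⁻¹) = SemidirectProduct.inl (Multiplicative.ofAdd (-2)) := by
    rw [map_mul, map_mul, map_mul, map_inv, map_inv, hfa, hfb, mul_inv_eq_iff_eq_mul,
      mul_inv_eq_iff_eq_mul]
    apply SemidirectProduct.ext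
    · apply Multiplicative.toAdd.injective
      simp only [A, B, SemidirectProduct.mul_left, SemidirectProduct.left_inl,
        SemidirectProduct.right_inl,
        SemidirectProduct.mul_right, act_apply, toAdd_mul, toAdd_ofAdd, toAdd_one]
      simp
      norm_num
    · simp [A, B]
  have hder : derivedSeries G0 2 ≤ f.ker := by
    have h1 : (commutator G0).map f ≤ (SemidirectProduct.rightHom : Multiplicative ℂ ⋊[act] ℂˣ →* ℂˣ).ker := by
      rw [commutator_def, Subgroup.map_commutator, Subgroup.commutator_le]
      intro x _ y _
      rw [MonoidHom.mem_ker, map_commutatorElement, commutatorElement_eq_one_iff_mul_comm, mul_comm]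
    have h2 : (derivedSeries G0 2).map f ≤ ⊥ := by
      rw [derivedSeries_succ, Subgroup.map_commutator, derivedSeries_one, Subgroup.commutator_le]
      intro x hx y hy
      rw [Subgroup.mem_bot, commutatorElement_eq_one_iff_mul_comm]
      have hx := h1 hx
      have hy := h1 hy
      rw [MonoidHom.mem_ker, SemidirectProduct.rightHom_eq_right] at hx hy
      apply SemidirectProduct.ext
      · simp [hx, hy, mul_comm]
      · simp [hx, hy]
    rwa [Subgroup.map_le_iff_le_comap] at h2
  obtain ⟨n, hn, h⟩ := (isOfFinOrder_iff_pow_eq_one.1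
    (isOfFinOrder_of_finite (QuotientGroup.mk (s := derivedSeries G0 2) (ga * gb * ga⁻¹ * gb⁻¹))))
  have h3 : (ga * gb * ga⁻¹ * gb⁻¹) ^ n ∈ derivedSeries G0 2 := by
    rw [← QuotientGroup.eq_one_iff]; exact h
  have h4 := hder h3
  rw [MonoidHom.mem_ker, map_pow, hc, ← map_pow] at h4
  have h5 : n • (-2 : ℂ) = 0 :=
    congrArg Multiplicative.toAdd (congrArg SemidirectProduct.left h4)
  rw [nsmul_eq_mul, mul_eq_zero, Nat.cast_eq_zero] at h5
  rcases h5 with h5 | h5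
  · omega
  · norm_num at h5
end Pf
open Matrix
namespace Pf

/-! ### Algebra of two by two matrices -/

/-- Fricke invariant -/
def fr {R : Type*} [CommRing R] (X Y : Matrix (Fin 2) (Fin 2) R) : R :=
  X.trace ^ 2 + Y.trace ^ 2 + (X * Y).trace ^ 2 - X.trace * Y.trace * (X * Y).trace - 4

/-- coordinates -/
def crd {R : Type*} [CommRing R] (X Y : Matrix (Fin 2) (Fin 2) R) : Matrix (Fin 4) (Fin 4) R :=
  Matrix.of ![![1, 0, 0, 1], ![X 0 0, X 0 1, X 1 0, X 1 1], ![Y 0 0, Y 0 1, Y 1 0, Y 1 1],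
    ![(X * Y) 0 0, (X * Y) 0 1, (X * Y) 1 0, (X * Y) 1 1]]

theorem det_crd {R : Type*} [CommRing R] (X Y : Matrix (Fin 2) (Fin 2) R) (hX : X.det = 1)
    (hY : Y.det = 1) : (crd X Y).det = fr X Y ∨ (crd X Y).det = - fr X Y := by
  rw [det_fin_two] at hX hY
  have e : (crd X Y).det = -(X 0 1 * Y 1 0 - X 1 0 * Y 0 1) ^ 2 -
      (X 0 1 * (Y 1 1 - Y 0 0) - Y 0 1 * (X 1 1 - X 0 0)) *
      (X 1 0 * (Y 0 0 - Y 1 1) - Y 1 0 * (X 0 0 - X 1 1)) ∨ (crd X Y).det = (X 0 1 * Y 1 0 - X 1 0 * Y 0 1) ^ 2 +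
      (X 0 1 * (Y 1 1 - Y 0 0) - Y 0 1 * (X 1 1 - X 0 0)) *
      (X 1 0 * (Y 0 0 - Y 1 1) - Y 1 0 * (X 0 0 - X 1 1)) := by
    simp [crd, det_succ_row_zero, Fin.sum_univ_succ, Fin.succAbove, Matrix.mul_apply]
    left; ring
  have e2 : (X 0 1 * Y 1 0 - X 1 0 * Y 0 1) ^ 2 +
      (X 0 1 * (Y 1 1 - Y 0 0) - Y 0 1 * (X 1 1 - X 0 0)) *
      (X 1 0 * (Y 0 0 - Y 1 1) - Y 1 0 * (X 0 0 - X 1 1)) = fr X Y := by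
    simp only [fr, trace_fin_two, Matrix.mul_apply, Fin.sum_univ_two]
    linear_combination (-4*(Y 0 0 * Y 1 1 - Y 0 1 * Y 1 0)+(Y 0 0+Y 1 1)^2)*hX +
      ((X 0 0+X 1 1)^2-4)*hY
  rcases e with e | e
  · right
    rw [e, ← e2]; ring
  · left
    rw [e, e2]

theorem span_adj (X Y M : Matrix (Fin 2) (Fin 2) ℤ) (hX : X.det = 1) (hY : Y.det = 1)
    (hM : M ∈ Algebra.adjoin ℤ {X, Y}) :
    ∃ p q r s : ℤ, M = p • 1 + q • X + r • Y + s • (X * Y) := by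
  rw [det_fin_two] at hX hY
  suffices h : ∀ p q r s : ℤ, ∃ p' q' r' s' : ℤ, M * (p • 1 + q • X + r • Y + s • (X * Y))
      = p' • 1 + q' • X + r' • Y + s' • (X * Y) by
    simpa using h 1 0 0 0
  induction hM using Algebra.adjoin_induction with
  | mem Z hZ =>
    intro p q r s
    rcases hZ with rfl | rfl
    · refine ⟨-q, p + q * Z.trace, -s, r + s * Z.trace, ?_⟩
      ext i j
      fin_cases i <;> fin_cases j <;>
      simp only [Matrix.mul_apply, Matrix.add_apply, Matrix.smul_apply, smul_eq_mul,
        Fin.sum_univ_two, trace_fin_two, Matrix.one_apply, Fin.zero_eta, Fin.mk_one, Fin.isValue,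
        zero_ne_one, one_ne_zero, if_true, if_false]
      · linear_combination (-q-s*Y 0 0) * hX
      · linear_combination (-s*Y 0 1) * hX
      · linear_combination (-s*Y 1 0) * hX
      · linear_combination (-q-s*Y 1 1) * hX
    · refine ⟨q * ((X * Z).trace - X.trace * Z.trace) - r - s * X.trace, q * Z.trace + s, p + q * X.trace + r * Z.trace + s * (X * Z).trace, -q, ?_⟩
      ext i j
      fin_cases i <;> fin_cases j <;>
      simp only [Matrix.mul_apply, Matrix.add_apply, Matrix.smul_apply, smul_eq_mul,
        Fin.sum_univ_two, trace_fin_two, Matrix.one_apply, Fin.zero_eta, Fin.mk_one, Fin.isValue,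
        zero_ne_one, one_ne_zero, if_true, if_false]
      · linear_combination (-r-s*X 1 1) * hY
      · linear_combination (s*X 0 1) * hY
      · linear_combination (s*X 1 0) * hY
      · linear_combination (-r-s*X 0 0) * hY
  | algebraMap n =>
    intro p q r s
    refine ⟨n * p, n * q, n * r, n * s, ?_⟩
    rw [← Algebra.smul_def]
    simp only [smul_add, smul_smul]
  | add x y _ _ hx hy =>
    intro p q r s
    obtain ⟨a, b, c, d, h⟩ := hx p q r s
    obtain ⟨a', b', c', d', h'⟩ := hy p q r s
    refine ⟨a + a', b + b', c + c', d + d', ?_⟩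
    rw [add_mul, h, h']
    simp only [add_smul]; abel
  | mul x y _ _ hx hy =>
    intro p q r s
    obtain ⟨a, b, c, d, h⟩ := hy p q r s
    rw [mul_assoc, h]
    exact hx _ _ _ _

theorem entries {M X Y Z : Matrix (Fin 2) (Fin 2) ℤ} {p q r s : ℤ}
    (h : M = p • 1 + q • X + r • Y + s • Z) :
    M 0 0 = p + q * X 0 0 + r * Y 0 0 + s * Z 0 0 ∧ M 0 1 = q * X 0 1 + r * Y 0 1 + s * Z 0 1 ∧
    M 1 0 = q * X 1 0 + r * Y 1 0 + s * Z 1 0 ∧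
    M 1 1 = p + q * X 1 1 + r * Y 1 1 + s * Z 1 1 := by
  subst h
  simp only [Matrix.add_apply, Matrix.smul_apply, smul_eq_mul,
        Matrix.one_apply, Fin.isValue,
        zero_ne_one, one_ne_zero, if_true, if_false, mul_one, mul_zero, zero_add, and_self]

theorem fr_dvd (X Y A B : Matrix (Fin 2) (Fin 2) ℤ) (hX : X.det = 1) (hY : Y.det = 1)
    (hA : A.det = 1) (hB : B.det = 1)
    (hAm : A ∈ Algebra.adjoin ℤ {X, Y}) (hBm : B ∈ Algebra.adjoin ℤ {X, Y}) :
    fr X Y ∣ fr A B := by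
  have hABm := mul_mem hAm hBm
  obtain ⟨p, q, r, s, h⟩ := span_adj X Y A hX hY hAm
  obtain ⟨p', q', r', s', h'⟩ := span_adj X Y B hX hY hBm
  obtain ⟨p'', q'', r'', s'', h''⟩ := span_adj X Y _ hX hY hABm
  have key : crd A B = Matrix.of ![![1, 0, 0, 0], ![p, q, r, s], ![p', q', r', s'],
      ![p'', q'', r'', s'']] * crd X Y := by
    obtain ⟨a1, a2, a3, a4⟩ := entries h
    obtain ⟨b1, b2, b3, b4⟩ := entries h'
    obtain ⟨c1, c2, c3, c4⟩ := entries h''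
    unfold crd
    rw [a1, a2, a3, a4, b1, b2, b3, b4, c1, c2, c3, c4]
    generalize X * Y = Z
    ext i j
    fin_cases i <;> fin_cases j <;> simp [Matrix.mul_apply, Fin.sum_univ_succ] <;> ring
  have hd : (crd X Y).det ∣ (crd A B).det := by
    rw [key, det_mul]; exact dvd_mul_left _ _
  rcases det_crd X Y hX hY with h1 | h1 <;> rcases det_crd A B hA hB with h2 | h2 <;>
    simpa [h1, h2] using hd

/-- Markov type obstruction -/
theorem no_neg_one (x y z : ℤ) : x ^ 2 + y ^ 2 + z ^ 2 - x * y * z - 4 ≠ -1 := by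
  intro h
  have h9 : ∀ x y z : ZMod 9, x ^ 2 + y ^ 2 + z ^ 2 - x * y * z - 4 ≠ -1 := by decide
  apply h9 x y z
  exact_mod_cast congrArg (Int.cast : ℤ → ZMod 9) h
end Pf
open Matrix
namespace Pf

theorem center_cases {R : Type*} [CommRing R] [IsDomain R] (X : Matrix.SpecialLinearGroup (Fin 2) R)
    (h : X ∈ Subgroup.center (Matrix.SpecialLinearGroup (Fin 2) R)) : X = 1 ∨ X = -1 := by
  rw [Matrix.SpecialLinearGroup.mem_center_iff] at h
  obtain ⟨r, hr, h⟩ := h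
  rw [Fintype.card_fin, pow_two, mul_self_eq_one_iff] at hr
  rcases hr with rfl | rfl
  · left; apply Subtype.ext; rw [← h]; simp
  · right; apply Subtype.ext; rw [← h, Matrix.SpecialLinearGroup.coe_neg, map_neg, map_one]; rfl

theorem neg_one_mem {R : Type*} [CommRing R] :
    (-1 : Matrix.SpecialLinearGroup (Fin 2) R) ∈ Subgroup.center (Matrix.SpecialLinearGroup (Fin 2) R) := by
  rw [Subgroup.mem_center_iff]
  intro g; simp

theorem mk_eq {R : Type*} [CommRing R] [IsDomain R] {X Y : Matrix.SpecialLinearGroup (Fin 2) R}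
    (h : (X : Matrix.SpecialLinearGroup (Fin 2) R ⧸ Subgroup.center (Matrix.SpecialLinearGroup (Fin 2) R)) = Y) :
    Y = X ∨ Y = -X := by
  rw [QuotientGroup.eq] at h
  rcases center_cases _ h with h | h
  · left; rw [inv_mul_eq_one] at h; exact h.symm
  · right; rw [inv_mul_eq_iff_eq_mul] at h; rw [h]; simp

theorem mk_neg_one {R : Type*} [CommRing R] :
    ((-1 : Matrix.SpecialLinearGroup (Fin 2) R) : Matrix.SpecialLinearGroup (Fin 2) R ⧸
      Subgroup.center (Matrix.SpecialLinearGroup (Fin 2) R)) = 1 := by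
  rw [QuotientGroup.eq_one_iff]; exact neg_one_mem

/-- `SL(2,ℤ)` modulo its centre -/
abbrev PZ : Type :=
  Matrix.SpecialLinearGroup (Fin 2) ℤ ⧸ Subgroup.center (Matrix.SpecialLinearGroup (Fin 2) ℤ)

theorem inv_mem_adj (X : Matrix.SpecialLinearGroup (Fin 2) ℤ)
    (S : Subalgebra ℤ (Matrix (Fin 2) (Fin 2) ℤ)) (h : (X : Matrix (Fin 2) (Fin 2) ℤ) ∈ S) :
    ((X⁻¹ : Matrix.SpecialLinearGroup (Fin 2) ℤ) : Matrix (Fin 2) (Fin 2) ℤ) ∈ S := by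
  have : ((X⁻¹ : Matrix.SpecialLinearGroup (Fin 2) ℤ) : Matrix (Fin 2) (Fin 2) ℤ) =
      (X : Matrix (Fin 2) (Fin 2) ℤ).trace • (1 : Matrix (Fin 2) (Fin 2) ℤ) - X := by
    rw [Matrix.SpecialLinearGroup.coe_inv, adjugate_fin_two]
    ext i j
    rw [Matrix.sub_apply, Matrix.smul_apply, smul_eq_mul, trace_fin_two]
    fin_cases i <;> fin_cases j <;> simp
  rw [this]
  exact sub_mem (Subalgebra.smul_mem _ (one_mem _) _) h

theorem adj_mem (ρ : G0 →* PZ) (u1 u2 : G0) (hu : Subgroup.closure {u1, u2} = ⊤)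
    (U1 U2 : Matrix.SpecialLinearGroup (Fin 2) ℤ) (h1 : ρ u1 = U1) (h2 : ρ u2 = U2) (g : G0) :
    ∀ X : Matrix.SpecialLinearGroup (Fin 2) ℤ, ρ g = X →
    (X : Matrix (Fin 2) (Fin 2) ℤ) ∈ Algebra.adjoin ℤ {U1.1, U2.1} := by
  have hg : g ∈ Subgroup.closure {u1, u2} := by rw [hu]; trivial
  have aux : ∀ (g : G0) (Y : Matrix.SpecialLinearGroup (Fin 2) ℤ), ρ g = Y →
      Y.1 ∈ Algebra.adjoin ℤ {U1.1, U2.1} → ∀ X : Matrix.SpecialLinearGroup (Fin 2) ℤ, ρ g = X →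
      (X : Matrix (Fin 2) (Fin 2) ℤ) ∈ Algebra.adjoin ℤ {U1.1, U2.1} := by
    intro g Y hY hm X hX
    rcases mk_eq (hY.symm.trans hX) with rfl | rfl
    · exact hm
    · rw [Matrix.SpecialLinearGroup.coe_neg]
      exact neg_mem hm
  induction hg using Subgroup.closure_induction with
  | mem x hx =>
    rcases hx with rfl | rfl
    · exact aux _ U1 h1 (Algebra.subset_adjoin (by simp))
    · exact aux _ U2 h2 (Algebra.subset_adjoin (by simp))
  | one => exact aux _ 1 (by simp) (one_mem _)
  | mul x y _ _ hx hy =>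
    obtain ⟨X, hX⟩ := QuotientGroup.mk_surjective (ρ x)
    obtain ⟨Y, hY⟩ := QuotientGroup.mk_surjective (ρ y)
    exact aux _ (X * Y) (by rw [map_mul, ← hX, ← hY]; rfl)
      (mul_mem (hx X hX.symm) (hy Y hY.symm))
  | inv x _ hx =>
    obtain ⟨X, hX⟩ := QuotientGroup.mk_surjective (ρ x)
    exact aux _ X⁻¹ (by rw [map_inv, ← hX]; rfl) (inv_mem_adj _ _ (hx X hX.symm))

/-- conjugation of the reduction modulo five -/
def cj (P Q : Matrix (Fin 2) (Fin 2) (ZMod 5)) (h : P * Q = 1) (h' : Q * P = 1) :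
    Matrix.SpecialLinearGroup (Fin 2) ℤ →* SL2 (ZMod 5) where
  toFun X := ⟨P * (Matrix.SpecialLinearGroup.map (Int.castRingHom (ZMod 5)) X).1 * Q, by
    rw [det_mul, det_mul, mul_right_comm, ← det_mul, h, det_one, one_mul]
    exact (Matrix.SpecialLinearGroup.map (Int.castRingHom (ZMod 5)) X).2⟩
  map_one' := by ext i j; simp [h]
  map_mul' X Y := by
    apply Subtype.ext
    change P * (Matrix.SpecialLinearGroup.map (Int.castRingHom (ZMod 5)) (X * Y)).1 * Q =
      (P * (Matrix.SpecialLinearGroup.map (Int.castRingHom (ZMod 5)) X).1 * Q) *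
      (P * (Matrix.SpecialLinearGroup.map (Int.castRingHom (ZMod 5)) Y).1 * Q)
    rw [map_mul, Matrix.SpecialLinearGroup.coe_mul]
    simp only [mul_assoc]
    rw [← mul_assoc Q P, h', one_mul]

theorem cj_coe (P Q h h' X) : (cj P Q h h' X).1 =
    P * (Matrix.SpecialLinearGroup.map (Int.castRingHom (ZMod 5)) X).1 * Q := rfl

theorem fr_neg_left {R : Type*} [CommRing R] (X Y : Matrix (Fin 2) (Fin 2) R) :
    fr (-X) Y = fr X Y := by
  simp only [fr, neg_mul, trace_neg]; ring
theorem fr_neg_right {R : Type*} [CommRing R] (X Y : Matrix (Fin 2) (Fin 2) R) :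
    fr X (-Y) = fr X Y := by
  simp only [fr, mul_neg, trace_neg]; ring

theorem trace_cj (P Q h h' X) : (cj P Q h h' X).1.trace = ((X.1.trace : ℤ) : ZMod 5) := by
  rw [cj_coe, trace_mul_comm, ← mul_assoc, h', one_mul]
  simp [trace_fin_two]

theorem fr_cj (P Q h h' X Y) : fr (cj P Q h h' X).1 (cj P Q h h' Y).1 =
    ((fr X.1 Y.1 : ℤ) : ZMod 5) := by
  have : (cj P Q h h' X).1 * (cj P Q h h' Y).1 = (cj P Q h h' (X * Y)).1 := by
    rw [map_mul]; rfl
  simp only [fr]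
  rw [this, trace_cj, trace_cj, trace_cj]
  simp [Matrix.SpecialLinearGroup.coe_mul]

theorem intcore (θ : G0 →* PSL2 (ZMod 5)) (g1 g2 : G0) (hg : Subgroup.closure {g1, g2} = ⊤)
    (Y1 Y2 α β : SL2 (ZMod 5)) (h1 : θ g1 = Y1) (h2 : θ g2 = Y2)
    (ha : θ ga = α) (hb : θ gb = β) (A B : Matrix.SpecialLinearGroup (Fin 2) ℤ) (hA : A ^ 2 = -1)
    (hB : B ^ 3 = -1) (P Q : Matrix (Fin 2) (Fin 2) (ZMod 5)) (h : P * Q = 1) (h' : Q * P = 1)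
    (hα : cj P Q h h' A = α) (hβ : cj P Q h h' B = β) :
    ∃ x y z : ℤ, ∃ f : ℤ, f = x ^ 2 + y ^ 2 + z ^ 2 - x * y * z - 4 ∧
      f ∣ fr A.1 B.1 ∧ fr A.1 B.1 ∣ f ∧ ((f : ℤ) : ZMod 5) = fr Y1.1 Y2.1 := by
  obtain ⟨ρ, hρa, hρb⟩ := G_hom (A : PZ) (B : PZ)
    (by rw [← QuotientGroup.mk_pow, hA]; exact mk_neg_one)
    (by rw [← QuotientGroup.mk_pow, hB]; exact mk_neg_one)
  have hcen : Subgroup.center (Matrix.SpecialLinearGroup (Fin 2) ℤ) ≤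
      (Subgroup.center (SL2 (ZMod 5))).comap (cj P Q h h') := by
    intro X hX
    rcases center_cases X hX with rfl | rfl
    · exact one_mem _
    · rw [Subgroup.mem_comap]
      have : cj P Q h h' (-1) = -1 := by
        apply Subtype.ext
        rw [cj_coe]
        simp [Matrix.SpecialLinearGroup.coe_neg, h]
      rw [this]; exact neg_one_mem
  have hθ : (QuotientGroup.map _ _ (cj P Q h h') hcen).comp ρ = θ := by
    apply G_ext
    · rw [MonoidHom.comp_apply, hρa, ha, QuotientGroup.map_mk, hα]
    · rw [MonoidHom.comp_apply, hρb, hb, QuotientGroup.map_mk, hβ]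
  obtain ⟨X1, hX1⟩ := QuotientGroup.mk_surjective (ρ g1)
  obtain ⟨X2, hX2⟩ := QuotientGroup.mk_surjective (ρ g2)
  have e1 : ((cj P Q h h' X1 : SL2 (ZMod 5)) : PSL2 (ZMod 5)) = Y1 := by
    rw [← h1, ← hθ, MonoidHom.comp_apply, ← hX1, QuotientGroup.map_mk]
  have e2 : ((cj P Q h h' X2 : SL2 (ZMod 5)) : PSL2 (ZMod 5)) = Y2 := by
    rw [← h2, ← hθ, MonoidHom.comp_apply, ← hX2, QuotientGroup.map_mk]
  refine ⟨X1.1.trace, X2.1.trace, (X1.1 * X2.1).trace, fr X1.1 X2.1, rfl, ?_, ?_, ?_⟩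
  · exact fr_dvd _ _ _ _ X1.2 X2.2 A.2 B.2 (adj_mem ρ g1 g2 hg X1 X2 hX1.symm hX2.symm _ A hρa)
      (adj_mem ρ g1 g2 hg X1 X2 hX1.symm hX2.symm _ B hρb)
  · exact fr_dvd _ _ _ _ A.2 B.2 X1.2 X2.2 (adj_mem ρ ga gb closure_top A B hρa hρb _ X1 hX1.symm)
      (adj_mem ρ ga gb closure_top A B hρa hρb _ X2 hX2.symm)
  · rw [← fr_cj P Q h h']
    rcases mk_eq e1 with r1 | r1 <;> rcases mk_eq e2 with r2 | r2 <;> rw [r1, r2] <;>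
      simp [Matrix.SpecialLinearGroup.coe_neg, fr_neg_left, fr_neg_right]
end Pf
open Matrix
namespace Pf

theorem dec_a : ∀ a b c d : ZMod 5, a * d - b * c = 1 →
    (a * a + b * c = 1 ∧ a * b + b * d = 0 ∧ c * a + d * c = 0 ∧ c * b + d * d = 1 ∨
     a * a + b * c = -1 ∧ a * b + b * d = 0 ∧ c * a + d * c = 0 ∧ c * b + d * d = -1) →
    a + d = 0 ∨ (a = 1 ∧ b = 0 ∧ c = 0 ∧ d = 1) ∨ (a = -1 ∧ b = 0 ∧ c = 0 ∧ d = -1) := by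
  decide +kernel

theorem dec_b : ∀ a b c d : ZMod 5, a * d - b * c = 1 →
    -- entries of the cube
    ((a * a + b * c) * a + (a * b + b * d) * c = 1 ∧ (a * a + b * c) * b + (a * b + b * d) * d = 0 ∧
      (c * a + d * c) * a + (c * b + d * d) * c = 0 ∧ (c * a + d * c) * b + (c * b + d * d) * d = 1 ∨
     (a * a + b * c) * a + (a * b + b * d) * c = -1 ∧ (a * a + b * c) * b + (a * b + b * d) * d = 0 ∧
      (c * a + d * c) * a + (c * b + d * d) * c = 0 ∧ (c * a + d * c) * b + (c * b + d * d) * d = -1) →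
    a + d = 1 ∨ a + d = -1 ∨ (a = 1 ∧ b = 0 ∧ c = 0 ∧ d = 1) ∨
      (a = -1 ∧ b = 0 ∧ c = 0 ∧ d = -1) := by
  decide +kernel

theorem dec_conj (s t u : ZMod 5) (h : (s = 0 ∧ t = 1 ∧ u = -1) ∨ (s = 2 ∧ t = 1 ∧ u = -3) ∨
      (s = 5 ∧ t = 3 ∧ u = -7)) : ∀ a b c : ZMod 5, -(a * a) - b * c = 1 →
    ∀ p q r : ZMod 5, p * (1 - p) - q * r = 1 → a * p + b * r + c * q - a * (1 - p) = t - u →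
    ∃ v w : ZMod 5, v * (c * v - a * w) - w * (a * v + b * w) ≠ 0 ∧
      p * v + q * w = s * v + u * (a * v + b * w) ∧
      r * v + (1 - p) * w = s * w + u * (c * v - a * w) ∧
      p * (a * v + b * w) + q * (c * v - a * w) = t * v + (1 - s) * (a * v + b * w) ∧
      r * (a * v + b * w) + (1 - p) * (c * v - a * w) = t * w + (1 - s) * (c * v - a * w) := by
  rcases h with ⟨rfl, rfl, rfl⟩ | ⟨rfl, rfl, rfl⟩ | ⟨rfl, rfl, rfl⟩ <;> decide +kernel

end Pf
open Matrix
namespace Pf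

/-- the order four matrix -/
def mA : Matrix.SpecialLinearGroup (Fin 2) ℤ := ⟨!![0, -1; 1, 0], by simp [det_fin_two_of]⟩

/-- the order six matrices -/
def mB (s t u : ℤ) (h : t * u = s - s * s - 1) : Matrix.SpecialLinearGroup (Fin 2) ℤ :=
  ⟨!![s, t; u, 1 - s], by rw [det_fin_two_of, h]; ring⟩

theorem mA_sq : mA ^ 2 = -1 := by
  apply Subtype.ext
  rw [pow_two, Matrix.SpecialLinearGroup.coe_mul, Matrix.SpecialLinearGroup.coe_neg]
  ext i j
  fin_cases i <;> fin_cases j <;> simp [mA]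

theorem mB_cube (s t u h) : mB s t u h ^ 3 = -1 := by
  apply Subtype.ext
  rw [pow_succ, pow_two, Matrix.SpecialLinearGroup.coe_mul, Matrix.SpecialLinearGroup.coe_mul,
    Matrix.SpecialLinearGroup.coe_neg]
  simp only [mB, Matrix.SpecialLinearGroup.coe_one]
  rw [mul_fin_two, mul_fin_two, one_fin_two]
  ext i j
  fin_cases i <;> fin_cases j <;> simp
  · linear_combination (s + 1) * h
  · linear_combination t * h
  · linear_combination u * h
  · linear_combination (2 - s) * h

theorem fr_AB (s t u h) : fr mA.1 (mB s t u h).1 = (t - u) ^ 2 - 3 := by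
  simp only [fr, mA, mB, mul_fin_two, trace_fin_two_of]; ring

theorem map_val (X : Matrix.SpecialLinearGroup (Fin 2) ℤ) :
    (Matrix.SpecialLinearGroup.map (Int.castRingHom (ZMod 5)) X).1 =
      X.1.map (Int.castRingHom (ZMod 5)) := rfl

theorem conj_exists (s t u : ℤ) (h : t * u = s - s * s - 1)
    (hs : (s = 0 ∧ t = 1 ∧ u = -1) ∨ (s = 2 ∧ t = 1 ∧ u = -3) ∨ (s = 5 ∧ t = 3 ∧ u = -7))
    (α β : SL2 (ZMod 5)) (ha : α.1 0 0 + α.1 1 1 = 0) (hb : β.1 0 0 + β.1 1 1 = 1)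
    (hz : (α.1 * β.1).trace = ((t - u : ℤ) : ZMod 5)) :
    ∃ P Q h1 h2, cj P Q h1 h2 mA = α ∧ cj P Q h1 h2 (mB s t u h) = β := by
  obtain ⟨α, dα⟩ := α
  obtain ⟨β, dβ⟩ := β
  simp only at ha hb hz
  rw [det_fin_two] at dα dβ
  obtain ⟨a, b, c, d, rfl⟩ : ∃ a b c d, α = !![a, b; c, d] := ⟨_, _, _, _, eta_fin_two α⟩
  obtain ⟨p, q, r, e, rfl⟩ : ∃ a b c d, β = !![a, b; c, d] := ⟨_, _, _, _, eta_fin_two β⟩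
  simp only [of_apply, cons_val', cons_val_zero, cons_val_one, cons_val_fin_one] at ha hb dα dβ
  rw [mul_fin_two, trace_fin_two_of] at hz
  obtain rfl : d = -a := by linear_combination ha
  obtain rfl : e = 1 - p := by linear_combination hb
  obtain ⟨v, w, hP, e1, e2, e3, e4⟩ := dec_conj (s : ZMod 5) t u
    (by rcases hs with ⟨rfl, rfl, rfl⟩ | ⟨rfl, rfl, rfl⟩ | ⟨rfl, rfl, rfl⟩ <;> simp) a b c
    (by linear_combination dα) p q r dβ (by push_cast at hz; linear_combination hz)
  let P : Matrix (Fin 2) (Fin 2) (ZMod 5) := !![v, a * v + b * w; w, c * v - a * w]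
  have hdet : IsUnit P.det := by
    rw [isUnit_iff_ne_zero, det_fin_two_of]
    intro h0; apply hP; linear_combination h0
  have k1 := Matrix.mul_nonsing_inv P hdet
  have k2 := Matrix.nonsing_inv_mul P hdet
  refine ⟨P, P⁻¹, k1, k2, ?_, ?_⟩
  · apply Subtype.ext
    rw [cj_coe]
    have : P * (Matrix.SpecialLinearGroup.map (Int.castRingHom (ZMod 5)) mA).1 =
        !![a, b; c, -a] * P := by
      have : (Matrix.SpecialLinearGroup.map (Int.castRingHom (ZMod 5)) mA).1 =
        !![0, -1; 1, 0] := by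
        rw [map_val]
        ext i j; fin_cases i <;> fin_cases j <;> simp [mA]
      rw [this]
      simp only [P, mul_fin_two]
      ext i j
      fin_cases i <;> fin_cases j <;> simp
      · linear_combination v * dα
      · ring
      · linear_combination w * dα
    rw [this, mul_assoc, k1, mul_one]
  · apply Subtype.ext
    rw [cj_coe]
    have : P * (Matrix.SpecialLinearGroup.map (Int.castRingHom (ZMod 5)) (mB s t u h)).1 =
        !![p, q; r, 1 - p] * P := by
      have : (Matrix.SpecialLinearGroup.map (Int.castRingHom (ZMod 5)) (mB s t u h)).1 =
        !![(s : ZMod 5), t; u, 1 - s] := by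
        rw [map_val]
        ext i j; fin_cases i <;> fin_cases j <;> simp [mB]
      rw [this]
      simp only [P, mul_fin_two]
      ext i j
      fin_cases i <;> fin_cases j <;> simp
      · linear_combination -e1
      · linear_combination -e3
      · linear_combination -e2
      · linear_combination -e4
    rw [this, mul_assoc, k1, mul_one]

theorem sub_case (θ : G0 →* PSL2 (ZMod 5)) (g1 g2 : G0) (hg : Subgroup.closure {g1, g2} = ⊤)
    (Y1 Y2 α β : SL2 (ZMod 5)) (h1 : θ g1 = Y1) (h2 : θ g2 = Y2) (hf : fr Y1.1 Y2.1 = 4)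
    (ha : θ ga = α) (hb : θ gb = β) (s t u : ℤ)
    (hs : (s = 0 ∧ t = 1 ∧ u = -1) ∨ (s = 2 ∧ t = 1 ∧ u = -3) ∨ (s = 5 ∧ t = 3 ∧ u = -7))
    (ta : α.1 0 0 + α.1 1 1 = 0) (tb : β.1 0 0 + β.1 1 1 = 1)
    (hz : (α.1 * β.1).trace = ((t - u : ℤ) : ZMod 5)) : False := by
  have h : t * u = s - s * s - 1 := by
    rcases hs with ⟨rfl, rfl, rfl⟩ | ⟨rfl, rfl, rfl⟩ | ⟨rfl, rfl, rfl⟩ <;> norm_num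
  obtain ⟨P, Q, k1, k2, hα, hβ⟩ := conj_exists s t u h hs α β ta tb hz
  obtain ⟨x, y, z, f, hfe, d1, d2, hm⟩ := intcore θ g1 g2 hg Y1 Y2 α β h1 h2 ha hb mA _ mA_sq
    (mB_cube s t u h) P Q k1 k2 hα hβ
  rw [hf] at hm
  rw [fr_AB] at d1 d2
  have hne := no_neg_one x y z
  rw [← hfe] at hne
  have := Int.natAbs_eq_natAbs_iff.1 (Int.natAbs_eq_of_dvd_dvd d1 d2)
  rcases hs with ⟨rfl, rfl, rfl⟩ | ⟨rfl, rfl, rfl⟩ | ⟨rfl, rfl, rfl⟩ <;> norm_num at this <;>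
    rcases this with rfl | rfl
  · revert hm; decide
  · exact hne rfl
  all_goals (revert hm; decide)

theorem comm_of_triv {K : Type*} [Group K] (θ : G0 →* K) (h : θ ga = 1 ∨ θ gb = 1) (x y : G0) :
    θ x * θ y = θ y * θ x := by
  have key : ∀ k : K, (θ ga ∈ Subgroup.zpowers k) → (θ gb ∈ Subgroup.zpowers k) →
      θ x * θ y = θ y * θ x := by
    intro k h1 h2
    have : ∀ g, θ g ∈ Subgroup.zpowers k := by
      intro g
      have hg : g ∈ Subgroup.closure {ga, gb} := by rw [closure_top]; trivial
      have hle : Subgroup.closure {ga, gb} ≤ (Subgroup.zpowers k).comap θ := by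
        rw [Subgroup.closure_le]
        rintro z (rfl | rfl)
        · exact h1
        · exact h2
      exact hle hg
    obtain ⟨m, hm⟩ := this x
    obtain ⟨n, hn⟩ := this y
    simp only at hm hn
    rw [← hm, ← hn, ← _root_.zpow_add, ← _root_.zpow_add, add_comm]
  rcases h with h | h
  · exact key (θ gb) (by rw [h]; exact one_mem _) (Subgroup.mem_zpowers _)
  · exact key (θ ga) (Subgroup.mem_zpowers _) (by rw [h]; exact one_mem _)

theorem mk_neg {R : Type*} [CommRing R] (X : Matrix.SpecialLinearGroup (Fin 2) R) :
    ((-X : Matrix.SpecialLinearGroup (Fin 2) R) : Matrix.SpecialLinearGroup (Fin 2) R ⧸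
      Subgroup.center (Matrix.SpecialLinearGroup (Fin 2) R)) = X := by
  rw [← neg_one_mul, QuotientGroup.mk_mul, mk_neg_one, one_mul]

theorem lift_a (k : PSL2 (ZMod 5)) (hk : k ^ 2 = 1) :
    k = 1 ∨ ∃ α : SL2 (ZMod 5), k = α ∧ α.1 0 0 + α.1 1 1 = 0 := by
  obtain ⟨α, rfl⟩ := QuotientGroup.mk_surjective k
  rw [← QuotientGroup.mk_pow, QuotientGroup.eq_one_iff] at hk
  have hc := center_cases _ hk
  have hd := α.2
  rw [det_fin_two] at hd
  have := dec_a (α.1 0 0) (α.1 0 1) (α.1 1 0) (α.1 1 1) hd (by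
    rcases hc with hc | hc
    · left
      have := congrArg Subtype.val hc
      rw [pow_two, Matrix.SpecialLinearGroup.coe_mul, ← Matrix.ext_iff] at this
      simp only [Matrix.mul_apply, Fin.sum_univ_two] at this
      exact ⟨this 0 0, this 0 1, this 1 0, this 1 1⟩
    · right
      have := congrArg Subtype.val hc
      rw [pow_two, Matrix.SpecialLinearGroup.coe_mul, ← Matrix.ext_iff] at this
      simp only [Matrix.mul_apply, Fin.sum_univ_two] at this
      exact ⟨this 0 0, this 0 1, this 1 0, this 1 1⟩)
  rcases this with h | ⟨h1, h2, h3, h4⟩ | ⟨h1, h2, h3, h4⟩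
  · exact Or.inr ⟨α, rfl, h⟩
  · left
    have : α = 1 := by
      apply Subtype.ext; ext i j; fin_cases i <;> fin_cases j <;> simp [h1, h2, h3, h4]
    rw [this]; rfl
  · left
    have : α = -1 := by
      apply Subtype.ext; rw [Matrix.SpecialLinearGroup.coe_neg]
      ext i j; fin_cases i <;> fin_cases j <;> simp [h1, h2, h3, h4]
    rw [this]; exact mk_neg_one

theorem lift_b (k : PSL2 (ZMod 5)) (hk : k ^ 3 = 1) :
    k = 1 ∨ ∃ α : SL2 (ZMod 5), k = α ∧ α.1 0 0 + α.1 1 1 = 1 := by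
  obtain ⟨α, rfl⟩ := QuotientGroup.mk_surjective k
  rw [← QuotientGroup.mk_pow, QuotientGroup.eq_one_iff] at hk
  have hc := center_cases _ hk
  have hd := α.2
  rw [det_fin_two] at hd
  have := dec_b (α.1 0 0) (α.1 0 1) (α.1 1 0) (α.1 1 1) hd (by
    rcases hc with hc | hc
    · left
      have := congrArg Subtype.val hc
      rw [pow_succ, pow_two, Matrix.SpecialLinearGroup.coe_mul, Matrix.SpecialLinearGroup.coe_mul,
        ← Matrix.ext_iff] at this
      simp only [Matrix.mul_apply, Fin.sum_univ_two] at this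
      exact ⟨this 0 0, this 0 1, this 1 0, this 1 1⟩
    · right
      have := congrArg Subtype.val hc
      rw [pow_succ, pow_two, Matrix.SpecialLinearGroup.coe_mul, Matrix.SpecialLinearGroup.coe_mul,
        ← Matrix.ext_iff] at this
      simp only [Matrix.mul_apply, Fin.sum_univ_two] at this
      exact ⟨this 0 0, this 0 1, this 1 0, this 1 1⟩)
  rcases this with h | h | ⟨h1, h2, h3, h4⟩ | ⟨h1, h2, h3, h4⟩
  · exact Or.inr ⟨α, rfl, h⟩
  · refine Or.inr ⟨-α, (mk_neg α).symm, ?_⟩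
    rw [Matrix.SpecialLinearGroup.coe_neg, Matrix.neg_apply, Matrix.neg_apply]
    linear_combination -h
  · left
    have : α = 1 := by
      apply Subtype.ext; ext i j; fin_cases i <;> fin_cases j <;> simp [h1, h2, h3, h4]
    rw [this]; rfl
  · left
    have : α = -1 := by
      apply Subtype.ext; rw [Matrix.SpecialLinearGroup.coe_neg]
      ext i j; fin_cases i <;> fin_cases j <;> simp [h1, h2, h3, h4]
    rw [this]; exact mk_neg_one

theorem core (θ : G0 →* PSL2 (ZMod 5)) (g1 g2 : G0) (hg : Subgroup.closure {g1, g2} = ⊤)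
    (Y1 Y2 : SL2 (ZMod 5)) (h1 : θ g1 = Y1) (h2 : θ g2 = Y2) (hf : fr Y1.1 Y2.1 = 4)
    (hnc : θ g1 * θ g2 ≠ θ g2 * θ g1) : False := by
  rcases lift_a (θ ga) (by rw [← map_pow, ga_sq, map_one]) with h | ⟨α, hα, ta⟩
  · exact hnc (comm_of_triv θ (Or.inl h) _ _)
  rcases lift_b (θ gb) (by rw [← map_pow, gb_cube, map_one]) with h | ⟨β, hβ, tb⟩
  · exact hnc (comm_of_triv θ (Or.inr h) _ _)
  have hα' : θ ga = ((-α : SL2 (ZMod 5)) : PSL2 (ZMod 5)) := by rw [hα]; exact (mk_neg α).symm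
  have ta' : (-α).1 0 0 + (-α).1 1 1 = 0 := by
    rw [Matrix.SpecialLinearGroup.coe_neg, Matrix.neg_apply, Matrix.neg_apply]
    linear_combination -ta
  have hn : ((-α).1 * β.1).trace = - (α.1 * β.1).trace := by
    rw [Matrix.SpecialLinearGroup.coe_neg, neg_mul, trace_neg]
  have hall : ∀ z : ZMod 5, z = 0 ∨ z = 2 ∨ z = 4 ∨ -z = 2 ∨ -z = 4 := by decide
  rcases hall (α.1 * β.1).trace with hz | hz | hz | hz | hz
  · exact sub_case θ g1 g2 hg Y1 Y2 α β h1 h2 hf hα hβ 5 3 (-7) (by simp) ta tb (by rw [hz]; decide)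
  · exact sub_case θ g1 g2 hg Y1 Y2 α β h1 h2 hf hα hβ 0 1 (-1) (by simp) ta tb (by rw [hz]; decide)
  · exact sub_case θ g1 g2 hg Y1 Y2 α β h1 h2 hf hα hβ 2 1 (-3) (by simp) ta tb (by rw [hz]; decide)
  · exact sub_case θ g1 g2 hg Y1 Y2 (-α) β h1 h2 hf hα' hβ 0 1 (-1) (by simp) ta' tb
      (by rw [hn, hz]; decide)
  · exact sub_case θ g1 g2 hg Y1 Y2 (-α) β h1 h2 hf hα' hβ 2 1 (-3) (by simp) ta' tb
      (by rw [hn, hz]; decide)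

end Pf
open Matrix
namespace Pf

/-- upper unipotent -/
def uE : SL2 (ZMod 5) := ⟨!![1, 1; 0, 1], by simp [det_fin_two_of]⟩
/-- lower unipotent -/
def uL : SL2 (ZMod 5) := ⟨!![1, 0; 1, 1], by simp [det_fin_two_of]⟩
/-- lower unipotent with entry two -/
def uF : SL2 (ZMod 5) := ⟨!![1, 0; 2, 1], by simp [det_fin_two_of]⟩

theorem sl_top (K : Subgroup (SL2 (ZMod 5))) (h1 : uE ∈ K) (h2 : uL ∈ K) : K = ⊤ := by
  rw [eq_top_iff]
  intro A _
  refine Matrix.SL2.transvection_induction (fun A => A ∈ K) ?_ (fun _ _ => mul_mem) A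
  intro i j h c
  have hc : ∀ c : ZMod 5, Matrix.SpecialLinearGroup.transvection (F := ZMod 5) (zero_ne_one : (0 : Fin 2) ≠ 1) c = uE ^ c.val := by
    decide +kernel
  have hd : ∀ c : ZMod 5, Matrix.SpecialLinearGroup.transvection (F := ZMod 5) (one_ne_zero : (1 : Fin 2) ≠ 0) c = uL ^ c.val := by
    decide +kernel
  fin_cases i
  · obtain rfl : j = 1 := by fin_cases j <;> tauto
    have := hc c
    exact this ▸ pow_mem h1 _
  · obtain rfl : j = 0 := by fin_cases j <;> tauto
    have := hd c
    exact this ▸ pow_mem h2 _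

theorem psl_top (K : Subgroup (PSL2 (ZMod 5))) (h1 : (uE : PSL2 (ZMod 5)) ∈ K)
    (h2 : (uL : PSL2 (ZMod 5)) ∈ K) : K = ⊤ := by
  have := sl_top (K.comap (QuotientGroup.mk' _)) h1 h2
  rw [eq_top_iff]
  intro x _
  obtain ⟨X, rfl⟩ := QuotientGroup.mk_surjective x
  have hX : X ∈ K.comap (QuotientGroup.mk' _) := by rw [this]; trivial
  exact hX

theorem psl_perfect : commutator (PSL2 (ZMod 5)) = ⊤ := by
  have : Group.IsPerfect (SL2 (ZMod 5)) :=
    ⟨Matrix.SL2.commutator_eq_top (a := (2 : ZMod 5)) (by decide) (by decide)⟩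
  have : Group.IsPerfect (PSL2 (ZMod 5)) := inferInstance
  exact this.commutator_eq_top

theorem goursat {A G : Type} [Group A] [Group G] (hA : commutator A = ⊤)
    (K : Subgroup (A × (G ⧸ derivedSeries G 2)))
    (h1 : K.map (MonoidHom.fst _ _) = ⊤) (h2 : K.map (MonoidHom.snd _ _) = ⊤) : K = ⊤ := by
  have hle : ⁅⁅K, K⁆, ⁅K, K⁆⁆ ≤ K :=
    (Subgroup.commutator_mono (Subgroup.commutator_le_self K) (Subgroup.commutator_le_self K)).trans
      (Subgroup.commutator_le_self K)
  have hfst : (⁅⁅K, K⁆, ⁅K, K⁆⁆).map (MonoidHom.fst A (G ⧸ derivedSeries G 2)) = ⊤ := by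
    rw [Subgroup.map_commutator, Subgroup.map_commutator, h1]
    rw [commutator_def] at hA
    rw [hA, hA]
  have hsnd : (⁅⁅K, K⁆, ⁅K, K⁆⁆).map (MonoidHom.snd A (G ⧸ derivedSeries G 2)) = ⊥ := by
    rw [Subgroup.map_commutator, Subgroup.map_commutator, h2]
    have : (⊤ : Subgroup (G ⧸ derivedSeries G 2)) =
        (⊤ : Subgroup G).map (QuotientGroup.mk' (derivedSeries G 2)) := by
      rw [Subgroup.map_top_of_surjective _ (QuotientGroup.mk'_surjective _)]
    rw [this, ← Subgroup.map_commutator, ← Subgroup.map_commutator]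
    have e : ⁅⁅(⊤ : Subgroup G), (⊤ : Subgroup G)⁆, ⁅(⊤ : Subgroup G), (⊤ : Subgroup G)⁆⁆ =
        derivedSeries G 2 := rfl
    rw [e, QuotientGroup.map_mk'_self]
  rw [eq_top_iff]
  rintro ⟨a, q⟩ _
  have hq : q ∈ K.map (MonoidHom.snd _ _) := by rw [h2]; trivial
  obtain ⟨⟨b, q'⟩, hb, rfl⟩ := hq
  have ha : a * b⁻¹ ∈ (⁅⁅K, K⁆, ⁅K, K⁆⁆).map (MonoidHom.fst A (G ⧸ derivedSeries G 2)) := by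
    rw [hfst]; trivial
  obtain ⟨⟨c, r⟩, hc, hcab⟩ := ha
  have hr : r ∈ (⁅⁅K, K⁆, ⁅K, K⁆⁆).map (MonoidHom.snd A (G ⧸ derivedSeries G 2)) := ⟨_, hc, rfl⟩
  rw [hsnd, Subgroup.mem_bot] at hr
  subst hr
  have := mul_mem (hle hc) hb
  have hcc : c = a * b⁻¹ := hcab
  subst hcc
  have e : (a, (MonoidHom.snd A (G ⧸ derivedSeries G 2)) (b, q')) = (a * b⁻¹, 1) * (b, q') := by
    rw [Prod.mk_mul_mk, inv_mul_cancel_right, one_mul]; rfl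
  rw [e]; exact this

theorem q_top (K : Subgroup (G0 ⧸ derivedSeries G0 2)) (h1 : (ga : G0 ⧸ derivedSeries G0 2) ∈ K)
    (h2 : (gb : G0 ⧸ derivedSeries G0 2) ∈ K) : K = ⊤ := by
  have hle : Subgroup.closure {ga, gb} ≤ K.comap (QuotientGroup.mk' _) := by
    rw [Subgroup.closure_le]
    rintro z (rfl | rfl)
    · exact h1
    · exact h2
  rw [closure_top] at hle
  rw [eq_top_iff]
  intro x _
  obtain ⟨X, rfl⟩ := QuotientGroup.mk_surjective x
  exact hle (Subgroup.mem_top X)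

/-- order four -/
def sS : SL2 (ZMod 5) := ⟨!![0, -1; 1, 0], by simp [det_fin_two_of]⟩
/-- order six -/
def sT : SL2 (ZMod 5) := ⟨!![0, -1; 1, 1], by simp [det_fin_two_of]⟩

theorem fin_surj : ∃ φ : G0 →* H0, Function.Surjective φ := by
  have e1 : sS ^ 2 = -1 := by decide +kernel
  have e2 : sT ^ 3 = -1 := by decide +kernel
  obtain ⟨f, fa, fb⟩ := G_hom (sS : PSL2 (ZMod 5)) (sT : PSL2 (ZMod 5))
    (by rw [← QuotientGroup.mk_pow, e1]; exact mk_neg_one)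
    (by rw [← QuotientGroup.mk_pow, e2]; exact mk_neg_one)
  have d1 : sS⁻¹ * sT = uE := by decide +kernel
  have d2 : sS * (sT⁻¹ * sS) * sS⁻¹ = uL := by decide +kernel
  have w1 : f (ga⁻¹ * gb) = uE := by
    rw [map_mul, map_inv, fa, fb, ← d1]; rfl
  have w2 : f (ga * (gb⁻¹ * ga) * ga⁻¹) = uL := by
    rw [map_mul, map_mul, map_mul, map_inv, map_inv, fa, fb, ← d2]; rfl
  refine ⟨f.prod (QuotientGroup.mk' _), ?_⟩
  rw [← MonoidHom.range_eq_top]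
  apply goursat psl_perfect
  · apply psl_top
    · refine ⟨_, ⟨ga⁻¹ * gb, rfl⟩, ?_⟩
      exact w1
    · refine ⟨_, ⟨ga * (gb⁻¹ * ga) * ga⁻¹, rfl⟩, ?_⟩
      exact w2
  · apply q_top
    · exact ⟨_, ⟨ga, rfl⟩, rfl⟩
    · exact ⟨_, ⟨gb, rfl⟩, rfl⟩

theorem fin_gen : Subgroup.closure {((uE : PSL2 (ZMod 5)), (ga : G0 ⧸ derivedSeries G0 2)),
    ((uF : PSL2 (ZMod 5)), (gb : G0 ⧸ derivedSeries G0 2))} = (⊤ : Subgroup H0) := by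
  apply goursat psl_perfect
  · apply psl_top
    · exact ⟨_, Subgroup.subset_closure (Or.inl rfl), rfl⟩
    · have e : uL = uF ^ 3 := by decide +kernel
      rw [e, QuotientGroup.mk_pow]
      apply pow_mem
      exact ⟨_, Subgroup.subset_closure (Or.inr rfl), rfl⟩
  · apply q_top
    · exact ⟨_, Subgroup.subset_closure (Or.inl rfl), rfl⟩
    · exact ⟨_, Subgroup.subset_closure (Or.inr rfl), rfl⟩

theorem uEF_nc : (uE : PSL2 (ZMod 5)) * uF ≠ uF * uE := by
  intro h
  rw [← QuotientGroup.mk_mul, ← QuotientGroup.mk_mul] at h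
  rcases mk_eq h with h | h
  · revert h; decide +kernel
  · revert h; decide +kernel

theorem fr_uEF : fr uE.1 uF.1 = 4 := by
  simp only [fr, uE, uF, mul_fin_two, trace_fin_two_of]
  decide

end Pf

/-- for `G = C_2 ∗ C_3` and `H = PSL(2,5) × G/G''`, the group `H` is
infinite, `H` is a homomorphic image of `G`, and some generating pair of `H` does
not lift to a generating pair of `G` along any homomorphism `G → H`. -/
theorem stmt4 :
    Infinite H0 ∧
    (∃ φ : G0 →* H0, Function.Surjective φ) ∧
    ∃ h1 h2 : H0, Subgroup.closure {h1, h2} = ⊤ ∧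
      ∀ (θ : G0 →* H0) (g1 g2 : G0),
        Subgroup.closure {g1, g2} = ⊤ → (θ g1, θ g2) ≠ (h1, h2) := by
  refine ⟨?_, Pf.fin_surj, _, _, Pf.fin_gen, ?_⟩
  · have := Pf.inf_Q
    exact Prod.infinite_of_right
  · intro θ g1 g2 hg he
    rw [Prod.mk.injEq] at he
    obtain ⟨he1, he2⟩ := he
    have k1 : ((MonoidHom.fst _ _).comp θ) g1 = (Pf.uE : PSL2 (ZMod 5)) := by
      rw [MonoidHom.comp_apply, he1]; rfl
    have k2 : ((MonoidHom.fst _ _).comp θ) g2 = (Pf.uF : PSL2 (ZMod 5)) := by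
      rw [MonoidHom.comp_apply, he2]; rfl
    refine Pf.core ((MonoidHom.fst _ _).comp θ) g1 g2 hg Pf.uE Pf.uF k1 k2 Pf.fr_uEF ?_
    rw [k1, k2]; exact Pf.uEF_nc
end

section
/- Let m, n be positive integers, G = C_m ∗ C_n, let H be a homomorphic image of G (there is a surjective group homomorphism G → H), and let (h1,h2) be a generating pair of H. Then there exist a group homomorphism θ : G → H and a generating pair (g1,g2) of G with θ(g1) = h1 and θ(g2) = h2 if and only if there exists a generating pair (h̃1,h̃2) of H that is Nielsen equivalent to (h1,h2) and satisfies h̃1^m = h̃2^n = 1. -/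
/-- `η_{h1,h2} : F → H`, the homomorphism from the free group of rank 2 sending the
two generators to `h1` and `h2`. -/
noncomputable def eta {H : Type*} [Group H] (p : H × H) : FreeGroup (Fin 2) →* H :=
  FreeGroup.lift ![p.1, p.2]

/-- Two pairs of elements of `H` are Nielsen equivalent if they lie in the same
`Aut(F)`-orbit, i.e. `η_{p'} = η_p ∘ α` for some automorphism `α` of the free
group `F` of rank 2. -/
def NielsenEquiv {H : Type*} [Group H] (p p' : H × H) : Prop :=
  ∃ α : FreeGroup (Fin 2) ≃* FreeGroup (Fin 2), eta p' = (eta p).comp α.toMonoidHom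

namespace FPx

structure FP (G : Type*) [Group G] (A B : Subgroup G) (L : G → ℕ) : Prop where
  L1 : L 1 = 0
  L0 : ∀ g, L g = 0 → g = 1
  inv : ∀ g, L g⁻¹ = L g
  hyp : ∀ g h k, min ((L g : ℤ) + L h - L (g⁻¹ * h)) ((L h : ℤ) + L k - L (h⁻¹ * k)) ≤
    (L g : ℤ) + L k - L (g⁻¹ * k)
  pre : ∀ g (k : ℕ), k ≤ L g → ∃ q, L q = k ∧ L (q⁻¹ * g) + k = L g
  one : ∀ g, L g ≤ 1 → g ∈ A ∨ g ∈ B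
  LA : ∀ g ∈ A, L g ≤ 1
  LB : ∀ g ∈ B, L g ≤ 1
  AB : ∀ a ∈ A, ∀ b ∈ B, a ≠ 1 → b ≠ 1 → L (a * b) = 2
  cA : ∀ a ∈ A, ∀ b ∈ A, a * b = b * a
  cB : ∀ a ∈ B, ∀ b ∈ B, a * b = b * a

/-- twice the Gromov product -/
def C {G : Type*} [Group G] (L : G → ℕ) (g h : G) : ℤ := (L g : ℤ) + L h - L (g⁻¹ * h)

namespace FP
variable {G : Type*} [Group G] {A B : Subgroup G} {L : G → ℕ}

theorem symm (F : FP G A B L) : FP G B A L where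
  L1 := F.L1
  L0 := F.L0
  inv := F.inv
  hyp := F.hyp
  pre := F.pre
  one := fun g h => (F.one g h).symm
  LA := F.LB
  LB := F.LA
  AB := fun a ha b hb h1 h2 => by
    rw [← F.inv, mul_inv_rev]
    exact F.AB _ (B := B) (A.inv_mem hb) _ (B.inv_mem ha) (by simpa) (by simpa)
  cA := F.cB
  cB := F.cA

theorem C_comm (F : FP G A B L) (g h : G) : C L g h = C L h g := by
  unfold C
  rw [← F.inv (g⁻¹ * h)]
  simp; ring

theorem um (F : FP G A B L) (g h k : G) : C L g h ≤ C L g k ∨ C L h k ≤ C L g k := by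
  have := F.hyp g h k
  unfold C
  omega

theorem C_one (F : FP G A B L) (g : G) : C L g 1 = 0 := by
  unfold C
  simp [F.inv, F.L1]

theorem C_nonneg (F : FP G A B L) (g h : G) : 0 ≤ C L g h := by
  have h1 := F.um g 1 h
  have h2 := F.C_one g
  have h3 := F.C_one h
  rw [F.C_comm] at h3
  omega

theorem C_self (F : FP G A B L) (g : G) : C L g g = 2 * L g := by
  unfold C
  simp [F.L1]; ring

theorem tri (F : FP G A B L) (g h : G) : L (g * h) ≤ L g + L h := by
  have := F.C_nonneg g⁻¹ h
  unfold C at this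
  simp only [F.inv, inv_inv] at this
  omega

theorem C_le (F : FP G A B L) (g h : G) : C L g h ≤ 2 * L g := by
  have := F.tri g (g⁻¹ * h)
  unfold C
  simp at this
  omega

theorem L_mul (F : FP G A B L) (s x : G) : (L (s * x) : ℤ) = L s + L x - C L s⁻¹ x := by
  unfold C; simp [F.inv]

/-- rebasing identity -/
theorem C_mul_self (F : FP G A B L) (y w : G) : C L (y * w) y = 2 * L y - C L y⁻¹ w := by
  have h1 := F.L_mul y w
  rw [F.C_comm]
  unfold C at *
  simp at *
  omega

theorem C_mul (F : FP G A B L) (s x y : G) :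
    C L (s * x) (s * y) = C L x y + 2 * L s - C L s⁻¹ x - C L s⁻¹ y := by
  have h1 := F.L_mul s x
  have h2 := F.L_mul s y
  unfold C at *
  have : (s * x)⁻¹ * (s * y) = x⁻¹ * y := by group
  rw [this]
  omega

theorem ell (F : FP G A B L) (y : G) (h : L (y * y) ≤ L y) : ∃ q, L (q⁻¹ * y * q) ≤ 1 := by
  obtain ⟨q, hq, hq2⟩ := F.pre y (L y / 2) (by omega)
  refine ⟨q, ?_⟩
  have h1 : C L y y⁻¹ = 2 * L y - L (y * y) := by
    unfold C; rw [← F.inv (y⁻¹ * y⁻¹)]; simp [F.inv]; ring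
  have h2 : C L q y = 2 * (L y / 2 : ℕ) := by unfold C; omega
  have h3 := F.um q y y⁻¹
  have h4 := F.C_le q y⁻¹
  have h5 : (L (y * q) : ℤ) = L y - (L y / 2 : ℕ) := by
    rw [F.L_mul, F.C_comm]; omega
  have h6 : C L (y * q) y = 2 * L y - 2 * (L y / 2 : ℕ) := by
    rw [F.C_mul_self, F.C_comm]; omega
  have h7 := F.um q y (y * q)
  rw [F.C_comm y] at h7
  have h8 : C L q (y * q) = L q + L (y * q) - L (q⁻¹ * y * q) := by
    unfold C; rw [mul_assoc]
  omega

end FP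
end FPx
namespace FPx
variable {G : Type*} [Group G]

def Gen (p : G × G) : Prop := Function.Surjective (eta p)

@[simp] theorem eta0 (p : G × G) : eta p (FreeGroup.of 0) = p.1 := by simp [eta]
@[simp] theorem eta1 (p : G × G) : eta p (FreeGroup.of 1) = p.2 := by simp [eta]

theorem eta_ext {f g : FreeGroup (Fin 2) →* G} (h0 : f (FreeGroup.of 0) = g (FreeGroup.of 0))
    (h1 : f (FreeGroup.of 1) = g (FreeGroup.of 1)) : f = g := by
  ext i
  fin_cases i
  · exact h0
  · exact h1

theorem gen_iff (p : G × G) : Gen p ↔ Subgroup.closure {p.1, p.2} = ⊤ := by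
  unfold Gen eta
  rw [← MonoidHom.range_eq_top, FreeGroup.range_lift_eq_closure]
  simp [Set.pair_comm]

theorem N_refl (p : G × G) : NielsenEquiv p p := ⟨MulEquiv.refl _, by ext; rfl⟩

theorem N_symm {p q : G × G} (h : NielsenEquiv p q) : NielsenEquiv q p := by
  obtain ⟨α, h⟩ := h
  refine ⟨α.symm, ?_⟩
  rw [h]
  ext; simp

theorem N_trans {p q r : G × G} (h : NielsenEquiv p q) (h' : NielsenEquiv q r) :
    NielsenEquiv p r := by
  obtain ⟨α, h⟩ := h
  obtain ⟨β, h'⟩ := h'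
  refine ⟨β.trans α, ?_⟩
  rw [h', h]
  ext; simp

theorem N_gen {p q : G × G} (h : NielsenEquiv p q) (hp : Gen p) : Gen q := by
  obtain ⟨α, h⟩ := h
  unfold Gen
  rw [h]
  exact hp.comp α.surjective

theorem N_map {K : Type*} [Group K] (θ : G →* K) {p q : G × G} (h : NielsenEquiv p q) :
    NielsenEquiv (θ p.1, θ p.2) (θ q.1, θ q.2) := by
  obtain ⟨α, h⟩ := h
  have key : ∀ r : G × G, eta (θ r.1, θ r.2) = θ.comp (eta r) := fun r =>
    eta_ext (by simp) (by simp)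
  refine ⟨α, ?_⟩
  rw [key, key, h, MonoidHom.comp_assoc]

theorem N_of (f g : FreeGroup (Fin 2) →* FreeGroup (Fin 2))
    (h0 : g (f (FreeGroup.of 0)) = FreeGroup.of 0) (h1 : g (f (FreeGroup.of 1)) = FreeGroup.of 1)
    (h0' : f (g (FreeGroup.of 0)) = FreeGroup.of 0) (h1' : f (g (FreeGroup.of 1)) = FreeGroup.of 1)
    (p : G × G) : NielsenEquiv p (eta p (f (FreeGroup.of 0)), eta p (f (FreeGroup.of 1))) :=
  ⟨MonoidHom.toMulEquiv f g (eta_ext h0 h1) (eta_ext h0' h1'), eta_ext (by simp) (by simp)⟩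

theorem N_swap (u v : G) : NielsenEquiv (u, v) (v, u) := by
  have := N_of (eta (FreeGroup.of 1, FreeGroup.of 0)) (eta (FreeGroup.of 1, FreeGroup.of 0))
    (by simp) (by simp) (by simp) (by simp) (u, v)
  simpa using this

theorem N_inv (u v : G) : NielsenEquiv (u, v) (u⁻¹, v) := by
  have := N_of (eta ((FreeGroup.of 0)⁻¹, FreeGroup.of 1)) (eta ((FreeGroup.of 0)⁻¹, FreeGroup.of 1))
    (by simp) (by simp) (by simp) (by simp) (u, v)
  simpa using this

theorem N_mul (u v : G) : NielsenEquiv (u, v) (u, u * v) := by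
  have := N_of (eta (FreeGroup.of 0, FreeGroup.of 0 * FreeGroup.of 1))
    (eta (FreeGroup.of 0, (FreeGroup.of 0)⁻¹ * FreeGroup.of 1))
    (by simp) (by simp) (by simp) (by simp) (u, v)
  simpa using this

theorem N_inv2 (u v : G) : NielsenEquiv (u, v) (u, v⁻¹) :=
  N_trans (N_swap _ _) (N_trans (N_inv _ _) (N_swap _ _))

theorem N_zmul (u v : G) (s : G) (hs : s ∈ Subgroup.zpowers u) : NielsenEquiv (u, v) (u, s * v) := by
  have hn : ∀ (u v : G) (k : ℕ), NielsenEquiv (u, v) (u, u ^ k * v) := by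
    intro u v k
    induction k with
    | zero => simpa using N_refl _
    | succ k ih =>
      have := N_trans ih (N_mul _ _)
      rwa [← mul_assoc, ← pow_succ'] at this
  obtain ⟨k, rfl⟩ := hs
  obtain ⟨k, rfl | rfl⟩ := k.eq_nat_or_neg
  · simpa using hn u v k
  · have h1 := N_trans (N_trans (N_inv u v) (hn _ _ k)) (N_inv _ _)
    simpa using h1

theorem N_conj {p : G × G} (hp : Gen p) (q : G) :
    NielsenEquiv p (q⁻¹ * p.1 * q, q⁻¹ * p.2 * q) := by
  obtain ⟨w, rfl⟩ := hp q
  refine ⟨MulAut.conj w⁻¹, eta_ext ?_ ?_⟩ <;> simp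

theorem exists_min {α : Type*} (f : α → ℕ) (P : α → Prop) (h : ∃ x, P x) :
    ∃ x, P x ∧ ∀ y, P y → f x ≤ f y := by
  obtain ⟨x, hx, hm⟩ := WellFounded.has_min (measure f).wf {x | P x} h
  exact ⟨x, hx, fun y hy => not_lt.mp (hm y hy)⟩

end FPx
namespace FPx
variable {G : Type*} [Group G] {A B : Subgroup G} {L : G → ℕ}

def Mn (L : G → ℕ) (p : G × G) : Prop :=
  ∀ p' : G × G, NielsenEquiv p p' → L p.1 + L p.2 ≤ L p'.1 + L p'.2

theorem Mn_of {p q : G × G} (h : NielsenEquiv p q) (hp : Mn L p)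
    (e : L p.1 + L p.2 = L q.1 + L q.2) : Mn L q := fun r hr => by
  have := hp r (N_trans h hr)
  omega

theorem Mn.swap {u v : G} (hp : Mn L (u, v)) : Mn L (v, u) :=
  Mn_of (N_swap _ _) hp (by simp; omega)

theorem Mn.inv (F : FP G A B L) {u v : G} (hp : Mn L (u, v)) : Mn L (u⁻¹, v) :=
  Mn_of (N_inv _ _) hp (by simp [F.inv])

theorem Mn.inv2 (F : FP G A B L) {u v : G} (hp : Mn L (u, v)) : Mn L (u, v⁻¹) :=
  Mn_of (N_inv2 _ _) hp (by simp [F.inv])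

theorem min_C (F : FP G A B L) {y t : G} (hp : Mn L (y, t)) : C L t y ≤ L y := by
  have h := hp (y, y⁻¹ * t) (N_zmul _ _ _ (Subgroup.inv_mem _ (Subgroup.mem_zpowers y)))
  have h2 := F.L_mul y⁻¹ t
  rw [F.C_comm]
  simp [F.inv] at h h2 ⊢
  omega

theorem self_C (F : FP G A B L) {y : G} (hy : L y < L (y * y)) : C L y⁻¹ y < L y := by
  unfold C
  simp [F.inv]; omega

theorem two_le (F : FP G A B L) {y : G} (hy : L y < L (y * y)) : 2 ≤ L y := by
  by_contra h
  rcases F.one y (by omega) with h1 | h1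
  · have h2 := F.LA _ (A.mul_mem h1 h1)
    have : y = 1 := F.L0 _ (by omega)
    subst this; simp at hy
  · have h2 := F.LB _ (B.mul_mem h1 h1)
    have : y = 1 := F.L0 _ (by omega)
    subst this; simp at hy

theorem aligned (F : FP G A B L) {y t : G} (hg : Gen (y, t)) (hp : Mn L (y, t)) (h2 : 2 ≤ L y)
    (h : L y ≤ C L t y) (h' : L y ≤ C L y⁻¹ t⁻¹) : False := by
  have m1 : C L t y ≤ L y := min_C F hp
  have m2 : C L y t ≤ L t := min_C F hp.swap
  rw [F.C_comm] at m2
  -- the new partner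
  obtain ⟨s, hs⟩ : ∃ s, s = y⁻¹ * t := ⟨_, rfl⟩
  have hN : NielsenEquiv (y, t) (y, s) :=
    hs ▸ N_zmul _ _ _ (Subgroup.inv_mem _ (Subgroup.mem_zpowers y))
  have hLs : (L s : ℤ) = L t := by
    have := F.L_mul y⁻¹ t
    rw [F.inv, inv_inv, F.C_comm, ← hs] at this
    omega
  obtain ⟨q, hq, hq2⟩ := F.pre y⁻¹ (L y / 2) (by rw [F.inv]; omega)
  rw [F.inv] at hq2
  have c1 : C L q y⁻¹ = 2 * L q := by
    unfold C; rw [F.inv]; omega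
  have c2 : C L s y⁻¹ = L y := by
    rw [hs, F.C_mul_self, F.inv, inv_inv, F.C_comm]; omega
  have c3 : C L s⁻¹ t⁻¹ = 2 * L t - L y := by
    have : s⁻¹ = t⁻¹ * y := by rw [hs]; group
    rw [this, F.C_mul_self, F.inv, inv_inv]; omega
  have d1 : 2 * L q ≤ C L q s := by
    have := F.um q y⁻¹ s
    rw [F.C_comm y⁻¹ s] at this
    omega
  have d2 : 2 * L q ≤ C L q s⁻¹ := by
    have e1 := F.um q y⁻¹ t⁻¹
    have e2 := F.um q t⁻¹ s⁻¹
    rw [F.C_comm t⁻¹ s⁻¹] at e2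
    omega
  have d3 := F.C_le q s
  have d4 := F.C_le q s⁻¹
  have k1 : (L (s * q) : ℤ) = L s - L q := by
    rw [F.L_mul, F.C_comm]; omega
  have k2 : C L (s * q) s = 2 * L s - 2 * L q := by
    rw [F.C_mul_self, F.C_comm]; omega
  have k3 := F.um q s (s * q)
  rw [F.C_comm s] at k3
  have k4 : C L q (s * q) = L q + L (s * q) - L (q⁻¹ * s * q) := by
    unfold C; rw [mul_assoc]
  have k5 : L (q⁻¹ * y * q) ≤ L y := by
    rw [← F.inv]
    have := F.tri (q⁻¹ * y⁻¹) q
    have e : (q⁻¹ * y * q)⁻¹ = q⁻¹ * y⁻¹ * q := by group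
    rw [e]; omega
  have fin := hp _ (N_trans hN (N_conj (N_gen hN hg) q))
  simp only at fin
  omega

theorem N2 (F : FP G A B L) {y t : G} (hg : Gen (y, t)) (hp : Mn L (y, t))
    (hy : L y < L (y * y)) (a b : G) (ha : a = y⁻¹ ∨ a = t ∨ a = t⁻¹)
    (hb : b = y ∨ b = t ∨ b = t⁻¹) : C L a y + C L y⁻¹ b < 2 * L y := by
  have h2 := two_le F hy
  have s1 := self_C F hy
  have m1 := min_C F hp
  have m2 := min_C F (hp.inv F)
  have m3 := min_C F (hp.inv2 F)
  have m4 := min_C F ((hp.inv F).inv2 F)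
  rw [F.C_comm _ y⁻¹, F.inv] at m2 m4
  have a1 := aligned F hg hp h2
  have a2 := aligned F (N_gen (N_inv2 _ _) hg) (hp.inv2 F) h2
  rw [inv_inv] at a2
  have u1 := F.um y⁻¹ t y
  have u2 := F.um y⁻¹ t⁻¹ y
  rcases ha with rfl | rfl | rfl <;> rcases hb with rfl | rfl | rfl <;> try omega
  · by_contra h
    exact a1 (by omega) (by omega)
  · by_contra h
    exact a2 (by omega) (by omega)

/-- value of a letter -/
def val (p : G × G) (x : Fin 2 × Bool) : G := cond x.2 (![p.1, p.2] x.1) (![p.1, p.2] x.1)⁻¹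

def li (x : Fin 2 × Bool) : Fin 2 × Bool := (x.1, !x.2)

theorem val_li (p : G × G) (x : Fin 2 × Bool) : val p (li x) = (val p x)⁻¹ := by
  rcases x with ⟨i, b⟩
  cases b <;> simp [val, li]

theorem li_li (x : Fin 2 × Bool) : li (li x) = x := by simp [li]
theorem li_ne (x : Fin 2 × Bool) : li x ≠ x := by
  rcases x with ⟨i, b⟩
  cases b <;> simp [li]

theorem N2' (F : FP G A B L) {u v : G} (hg : Gen (u, v)) (hp : Mn L (u, v))
    (hu : L u < L (u * u)) (hv : L v < L (v * v)) (y a b : Fin 2 × Bool) (ha : a ≠ y)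
    (hb : b ≠ li y) :
    C L (val (u, v) a) (val (u, v) y) + C L (val (u, v) (li y)) (val (u, v) b)
      < 2 * L (val (u, v) y) := by
  rw [val_li]
  have iv : ∀ w : G, L w < L (w * w) → L w⁻¹ < L (w⁻¹ * w⁻¹) := fun w h => by
    rw [← mul_inv_rev, F.inv, F.inv]; exact h
  rcases y with ⟨i, s⟩
  rcases a with ⟨j, s1⟩
  rcases b with ⟨k, s2⟩
  fin_cases i <;> cases s
  · apply N2 F (y := u⁻¹) (t := v) (N_gen (N_inv _ _) hg) (hp.inv F) (iv _ hu)
    · fin_cases j <;> cases s1 <;> simp [val] at ha ⊢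
    · fin_cases k <;> cases s2 <;> simp [val, li] at hb ⊢
  · apply N2 F (y := u) (t := v) hg hp hu
    · fin_cases j <;> cases s1 <;> simp [val] at ha ⊢
    · fin_cases k <;> cases s2 <;> simp [val, li] at hb ⊢
  · apply N2 F (y := v⁻¹) (t := u) (N_gen (N_inv _ _) (N_gen (N_swap _ _) hg)) (hp.swap.inv F)
      (iv _ hv)
    · fin_cases j <;> cases s1 <;> simp [val] at ha ⊢
    · fin_cases k <;> cases s2 <;> simp [val, li] at hb ⊢
  · apply N2 F (y := v) (t := u) (N_gen (N_swap _ _) hg) hp.swap hv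
    · fin_cases j <;> cases s1 <;> simp [val] at ha ⊢
    · fin_cases k <;> cases s2 <;> simp [val, li] at hb ⊢

theorem free_aux (F : FP G A B L) {u v : G} (hg : Gen (u, v)) (hp : Mn L (u, v))
    (hu : L u < L (u * u)) (hv : L v < L (v * v)) (l : List (Fin 2 × Bool)) :
    ∀ y, FreeGroup.IsReduced (y :: l) → ∀ t, t ≠ y →
      C L (val (u, v) t) (val (u, v) y) <
        C L (((y :: l).map (val (u, v))).prod) (val (u, v) y) := by
  induction l with
  | nil =>
    intro y _ t ht
    have := N2' F hg hp hu hv y t y ht (li_ne y).symm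
    have h2 := F.C_nonneg (val (u, v) (li y)) (val (u, v) y)
    simp only [List.map_cons, List.map_nil, List.prod_cons, List.prod_nil, mul_one]
    rw [F.C_self]
    omega
  | cons z l ih =>
    intro y hr t ht
    have hr' : FreeGroup.IsReduced (z :: l) := List.IsChain.tail hr
    have hz : z ≠ li y := by
      intro h
      have := (FreeGroup.isReduced_cons_cons.mp hr).1
      subst h
      simp [li] at this
    have h1 := ih z hr' (li y) hz.symm
    have h2 := N2' F hg hp hu hv y t z ht hz
    rw [List.map_cons, List.prod_cons, F.C_mul_self, ← val_li]
    set w := ((z :: l).map (val (u, v))).prod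
    have h3 := F.um (val (u, v) (li y)) w (val (u, v) z)
    omega

theorem free_inj (F : FP G A B L) {u v : G} (hg : Gen (u, v)) (hp : Mn L (u, v))
    (hu : L u < L (u * u)) (hv : L v < L (v * v)) : Function.Injective (eta (u, v)) := by
  rw [injective_iff_map_eq_one]
  intro w hw
  have hr := FreeGroup.isReduced_toWord (x := w)
  rw [← FreeGroup.mk_toWord (x := w)] at hw ⊢
  rcases hl : w.toWord with _ | ⟨y, l⟩
  · rfl
  · exfalso
    rw [hl] at hr hw
    have h := free_aux F hg hp hu hv l y hr (li y) (li_ne y)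
    have h2 : ((y :: l).map (val (u, v))).prod = 1 := hw
    rw [h2, F.C_comm 1, F.C_one] at h
    have := F.C_nonneg (val (u, v) (li y)) (val (u, v) y)
    omega

end FPx
namespace FPx
variable {G : Type*} [Group G] {A B : Subgroup G} {L : G → ℕ}

def Mu (L : G → ℕ) (u x : G) : Prop := ∀ x', NielsenEquiv (u, x) (u, x') → L x ≤ L x'

theorem Mu.inv (F : FP G A B L) {u x : G} (h : Mu L u x) : Mu L u x⁻¹ := fun x' hx' => by
  rw [F.inv]; exact h _ (N_trans (N_inv2 _ _) hx')

theorem c_i (F : FP G A B L) {u x s : G} (h : Mu L u x) (hu : u ∈ A)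
    (hs : s ∈ Subgroup.zpowers u) : C L s x ≤ 1 := by
  have h1 := h _ (N_zmul u x s⁻¹ (Subgroup.inv_mem _ hs))
  have h2 := F.L_mul s⁻¹ x
  have h3 := F.LA s ((Subgroup.zpowers_le.mpr hu) hs)
  rw [F.inv, inv_inv] at h2
  omega

theorem first (F : FP G A B L) {x : G} (hx : 1 ≤ L x) : ∃ q, L q = 1 ∧ C L q x = 2 := by
  obtain ⟨q, h1, h2⟩ := F.pre x 1 hx
  refine ⟨q, h1, ?_⟩
  unfold C; omega

theorem L_pos (F : FP G A B L) {x : G} (hx : x ≠ 1) : 1 ≤ L x := by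
  by_contra h
  exact hx (F.L0 _ (by omega))

theorem C_AB (F : FP G A B L) {a b : G} (ha : a ∈ A) (hb : b ∈ B) : C L a b = 0 := by
  by_cases h1 : a = 1
  · subst h1; rw [F.C_comm, F.C_one]
  by_cases h2 : b = 1
  · subst h2; rw [F.C_one]
  have e := F.AB _ (A.inv_mem ha) _ hb (by simpa) h2
  have := F.LA _ ha
  have := F.LB _ hb
  have := F.C_nonneg a b
  unfold C at *
  omega

theorem startA (F : FP G A B L) {u x s q : G} (h : Mu L u x) (hu : u ∈ A)
    (hs : s ∈ Subgroup.zpowers u) (hs1 : s ≠ 1) (hq : L q = 1) (hqx : C L q x = 2) (hqA : q ∈ A) :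
    L (s * q) = 1 ∧ 2 ≤ C L (s * q) (s * x) := by
  have hsA : s ∈ A := (Subgroup.zpowers_le.mpr hu) hs
  have h0 := F.LA s hsA
  have h0' := L_pos F hs1
  have h1 := c_i F h hu (Subgroup.inv_mem _ hs)
  have h2 := F.um s⁻¹ q x
  have h3 := F.L_mul s q
  have h4 := F.C_mul s q x
  have h5 := F.LA _ (A.mul_mem hsA hqA)
  omega

theorem startB (F : FP G A B L) {u x s q : G} (hu : u ∈ A)
    (hs : s ∈ Subgroup.zpowers u) (hs1 : s ≠ 1) (hqx : C L q x = 2) (hqB : q ∈ B) :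
    C L s x ≤ 0 ∧ 2 ≤ C L s (s * x) := by
  have hsA : s ∈ A := (Subgroup.zpowers_le.mpr hu) hs
  have h0' := L_pos F hs1
  have h1 := C_AB F hsA hqB
  have h2 := C_AB F (A.inv_mem hsA) hqB
  have h3 := F.um s x q
  have h4 := F.um s⁻¹ x q
  have h5 := F.C_mul_self s x
  rw [F.C_comm] at h5
  rw [F.C_comm x q] at h3 h4
  omega

theorem c_ii (F : FP G A B L) {u x s : G} (h : Mu L u x) (hu : u ∈ A) (hx : 1 ≤ L x)
    (hs : s ∈ Subgroup.zpowers u) (hs1 : s ≠ 1) : C L (s * x) x ≤ 1 := by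
  have hsA : s ∈ A := (Subgroup.zpowers_le.mpr hu) hs
  obtain ⟨q, hq, hqx⟩ := first F hx
  rcases F.one q (by omega) with hA | hB
  · obtain ⟨e1, e2⟩ := startA F h hu hs hs1 hq hqx hA
    have e3 : C L (s * q) q = 1 := by
      unfold C
      have : (s * q)⁻¹ * q = s⁻¹ := by rw [F.cA s hsA q hA]; group
      rw [this, F.inv]
      have := F.LA _ hsA
      have := L_pos F hs1
      omega
    have k1 := F.um (s * q) (s * x) x
    have k2 := F.um (s * q) x q
    rw [F.C_comm x q] at k2
    omega
  · obtain ⟨e1, e2⟩ := startB F hu hs hs1 hqx hB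
    have k1 := F.um s (s * x) x
    omega

theorem c_iii (F : FP G A B L) {u x s : G} (hg : Gen (u, x)) (h : Mu L u x) (hu : u ∈ A)
    (hx : 2 ≤ L x)
    (hs : s ∈ Subgroup.zpowers u) (hs1 : s ≠ 1) : C L (s * x⁻¹) x ≤ 1 := by
  have hsA : s ∈ A := (Subgroup.zpowers_le.mpr hu) hs
  obtain ⟨q, hq, hqx⟩ := first F (x := x) (by omega)
  obtain ⟨r, hr, hrx⟩ := first F (x := x⁻¹) (by rw [F.inv]; omega)
  rcases F.one r (by omega) with hrA | hrB
  · obtain ⟨e1, e2⟩ := startA F (h.inv F) hu hs hs1 hr hrx hrA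
    rcases F.one q (by omega) with hqA | hqB
    · exfalso
      have hc := N_conj hg q
      have e : q⁻¹ * u * q = u := by rw [mul_assoc, F.cA u hu q hqA]; group
      simp only [e] at hc
      have hm := h _ hc
      have k1 : C L (x⁻¹ * q) x⁻¹ = 2 * L x - 2 := by
        rw [F.C_mul_self, F.inv, inv_inv, F.C_comm]; omega
      have k2 : (L (x⁻¹ * q) : ℤ) = L x - 1 := by
        rw [F.L_mul, F.inv, inv_inv, F.C_comm]; omega
      have k3 : 1 ≤ C L q r := by
        unfold C
        have := F.LA _ (A.mul_mem (A.inv_mem hqA) hrA)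
        omega
      have k4 := F.um q r x⁻¹
      have k5 := F.um q x⁻¹ (x⁻¹ * q)
      rw [F.C_comm x⁻¹ (x⁻¹ * q)] at k5
      have k6 : C L q (x⁻¹ * q) = L q + L (x⁻¹ * q) - L (q⁻¹ * x * q) := by
        rw [← F.inv (q⁻¹ * x * q)]
        unfold C; congr 3; group
      omega
    · have k0 := C_AB F (A.mul_mem hsA hrA) hqB
      have k1 := F.um (s * r) (s * x⁻¹) x
      have k2 := F.um (s * r) x q
      rw [F.C_comm x q] at k2
      omega
  · obtain ⟨e1, e2⟩ := startB F hu hs hs1 hrx hrB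
    have e3 := c_i F h hu hs
    have k1 := F.um s (s * x⁻¹) x
    omega

inductive R (u v : G) : G → G → Prop
  | base (e s : G) (he : e = v ∨ e = v⁻¹) (hs : s ∈ Subgroup.zpowers u) : R u v e (e * s)
  | step (e s d w : G) (he : e = v ∨ e = v⁻¹) (hs : s ∈ Subgroup.zpowers u) (hw : R u v d w)
      (h : s ≠ 1 ∨ d = e) : R u v e (e * (s * w))

theorem R_e {u v e w : G} (h : R u v e w) : e = v ∨ e = v⁻¹ := by
  cases h <;> assumption

theorem R_bound (F : FP G A B L) {u v : G} (hg : Gen (u, v)) (h : Mu L u v) (hu : u ∈ A)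
    (hv : L v < L (v * v)) {e w : G} (hR : R u v e w) : (L v : ℤ) + 1 ≤ C L w e := by
  have h2 := two_le F hv
  have hL : ∀ e, e = v ∨ e = v⁻¹ → L e = L v := by
    rintro e (rfl | rfl); rfl; exact F.inv _
  have hM : ∀ e, e = v ∨ e = v⁻¹ → Mu L u e := by
    rintro e (rfl | rfl); exact h; exact h.inv F
  have hM' : ∀ e, e = v ∨ e = v⁻¹ → Mu L u e⁻¹ := fun e he => (hM e he).inv F
  have hG : ∀ e, e = v ∨ e = v⁻¹ → Gen (u, e) := by
    rintro e (rfl | rfl); exact hg; exact N_gen (N_inv2 _ _) hg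
  have hself : ∀ e, e = v ∨ e = v⁻¹ → C L e⁻¹ e < L v := by
    rintro e (rfl | rfl)
    · exact self_C F hv
    · rw [inv_inv, F.C_comm]; exact self_C F hv
  induction hR with
  | base e s he hs =>
    have k := c_i F (hM' e he) hu hs
    rw [F.C_mul_self, hL e he, F.C_comm]
    omega
  | step e s d w he hs hw hsd ih =>
    have hd := R_e hw
    rw [F.C_mul_self, hL e he]
    by_cases hs1 : s = 1
    · have hde : d = e := by tauto
      subst hs1; subst hde
      rw [one_mul]
      have := hself d he
      have k := F.um d⁻¹ w d
      omega
    · have i1 := c_i F (hM d hd) hu (Subgroup.inv_mem _ hs)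
      have k1 := F.um s⁻¹ w d
      have k2 := F.C_mul s w d
      have k3 := L_pos F hs1
      have k4 := F.um e⁻¹ (s * w) (s * d)
      have k5 : C L e⁻¹ (s * d) ≤ 1 := by
        rw [F.C_comm]
        have hdd : d = e⁻¹ ∨ d = e := by
          rcases he with rfl | rfl <;> rcases hd with rfl | rfl <;> simp
        rcases hdd with rfl | rfl
        · exact c_ii F (hM' e he) hu (by rw [F.inv, hL e he]; omega) hs hs1
        · have := c_iii F (N_gen (N_inv2 _ _) (hG d hd)) (hM' d hd) hu
            (by rw [F.inv, hL d hd]; omega) hs hs1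
          rwa [inv_inv] at this
      omega

theorem R_all {u v : G} (hg : Gen (u, v)) (g : G) :
    g ∈ Subgroup.zpowers u ∨ ∃ s ∈ Subgroup.zpowers u, ∃ e w, R u v e w ∧ g = s * w := by
  have hg' := (gen_iff _).mp hg
  have hmem : g ∈ Subgroup.closure {u, v} := by rw [hg']; trivial
  have hu : ∀ s ∈ Subgroup.zpowers u, ∀ g : G,
      (g ∈ Subgroup.zpowers u ∨ ∃ s ∈ Subgroup.zpowers u, ∃ e w, R u v e w ∧ g = s * w) →
      (s * g ∈ Subgroup.zpowers u ∨
        ∃ s' ∈ Subgroup.zpowers u, ∃ e w, R u v e w ∧ s * g = s' * w) := by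
    rintro s hs g (h | ⟨s', hs', e, w, hR, rfl⟩)
    · exact Or.inl (Subgroup.mul_mem _ hs h)
    · exact Or.inr ⟨s * s', Subgroup.mul_mem _ hs hs', e, w, hR, by group⟩
  have hv : ∀ e, e = v ∨ e = v⁻¹ → ∀ g : G,
      (g ∈ Subgroup.zpowers u ∨ ∃ s ∈ Subgroup.zpowers u, ∃ e w, R u v e w ∧ g = s * w) →
      (e * g ∈ Subgroup.zpowers u ∨
        ∃ s' ∈ Subgroup.zpowers u, ∃ e' w, R u v e' w ∧ e * g = s' * w) := by
    rintro e he g (h | ⟨s, hs, d, w, hR, rfl⟩)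
    · exact Or.inr ⟨1, Subgroup.one_mem _, e, _, R.base e g he h, by group⟩
    · by_cases hc : s ≠ 1 ∨ d = e
      · exact Or.inr ⟨1, Subgroup.one_mem _, e, _, R.step e s d w he hs hR hc, by group⟩
      · push Not at hc
        obtain ⟨rfl, hde⟩ := hc
        have hd := R_e hR
        have hdd : d = e⁻¹ := by
          rcases he with rfl | rfl <;> rcases hd with rfl | rfl <;> simp at hde ⊢
        subst hdd
        cases hR with
        | base _ s he hs => left; simpa using hs
        | step _ s d w he hs hw h => right; exact ⟨s, hs, d, w, hw, by group⟩
  induction hmem using Subgroup.closure_induction_left with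
  | one => exact Or.inl (Subgroup.one_mem _)
  | mul_left x hx y hy ih =>
    rcases hx with rfl | hx
    · exact hu _ (Subgroup.mem_zpowers _) _ ih
    · exact hv x (Or.inl hx) _ ih
  | inv_mul_cancel x hx y hy ih =>
    rcases hx with rfl | hx
    · exact hu _ (Subgroup.inv_mem _ (Subgroup.mem_zpowers _)) _ ih
    · exact hv x⁻¹ (Or.inr (by rw [hx])) _ ih

theorem ellCase (F : FP G A B L) (hB : ∃ b ∈ B, b ≠ 1) {u v : G} (hg : Gen (u, v)) (hu : u ∈ A) :
    ∃ v', NielsenEquiv (u, v) (u, v') ∧ L (v' * v') ≤ L v' := by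
  obtain ⟨x, hx, hm⟩ := exists_min L (fun x => NielsenEquiv (u, v) (u, x)) ⟨v, N_refl _⟩
  refine ⟨x, hx, ?_⟩
  by_contra hlt
  push Not at hlt
  have hM : Mu L u x := fun x' hx' => hm x' (N_trans hx hx')
  have hg' := N_gen hx hg
  obtain ⟨b, hb, hb1⟩ := hB
  have h2 := two_le F hlt
  have hbL := F.LB b hb
  have hbL' := L_pos F hb1
  rcases R_all hg' b with h | ⟨s, hs, e, w, hR, hbw⟩
  · have h3 := C_AB F ((Subgroup.zpowers_le.mpr hu) h) hb
    rw [F.C_self] at h3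
    omega
  · have k := R_bound F hg' hM hu hlt hR
    have he := R_e hR
    have hM' : Mu L u e := by
      rcases he with rfl | rfl
      · exact hM
      · exact hM.inv F
    have hsA := (Subgroup.zpowers_le.mpr hu) hs
    have hw : w = s⁻¹ * b := by rw [hbw]; group
    have i1 := c_i F hM' hu (Subgroup.inv_mem _ hs)
    by_cases hs1 : s = 1
    · have := F.C_le w e
      subst hs1
      rw [one_mul] at hbw
      rw [← hbw] at this k
      omega
    · have k2 := F.C_mul_self s⁻¹ b
      rw [inv_inv, C_AB F hsA hb, ← hw, F.inv, F.C_comm] at k2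
      have := F.um s⁻¹ w e
      have := L_pos F hs1
      omega

end FPx
namespace FPx

section words
open Monoid
variable {ι : Type*} {M : ι → Type*} [∀ i, Group (M i)]

def pr (l : List (Σ i, M i)) : CoprodI M := (l.map fun x => CoprodI.of x.2).prod

def Red (l : List (Σ i, M i)) : Prop :=
  (∀ x ∈ l, Sigma.snd x ≠ 1) ∧ (l.map Sigma.fst).IsChain (· ≠ ·)

def toW (l : List (Σ i, M i)) (h : Red l) : CoprodI.Word M :=
  ⟨l, h.1, by have := h.2; rwa [List.isChain_map] at this⟩

open Classical in
noncomputable def len (g : CoprodI M) : ℕ := (CoprodI.Word.equiv g).toList.length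

theorem len_pr (l : List (Σ i, M i)) (h : Red l) : len (pr l) = l.length := by
  classical
  have : pr l = CoprodI.Word.equiv.symm (toW l h) := rfl
  unfold len
  rw [this]
  have e := Equiv.apply_symm_apply CoprodI.Word.equiv (toW l h)
  have e2 := congrArg (fun w => w.toList.length) e
  convert e2
  rfl

theorem exists_red (g : CoprodI M) : ∃ l, Red l ∧ pr l = g := by
  classical
  refine ⟨(CoprodI.Word.equiv g).toList, ⟨(CoprodI.Word.equiv g).ne_one, ?_⟩, ?_⟩
  · rw [List.isChain_map]; exact (CoprodI.Word.equiv g).chain_ne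
  · exact Equiv.symm_apply_apply CoprodI.Word.equiv g

def il (l : List (Σ i, M i)) : List (Σ i, M i) := (l.map fun x => ⟨x.1, x.2⁻¹⟩).reverse

theorem pr_append (l k : List (Σ i, M i)) : pr (l ++ k) = pr l * pr k := by simp [pr]
theorem pr_cons (x : Σ i, M i) (k : List (Σ i, M i)) : pr (x :: k) = CoprodI.of x.2 * pr k := by
  simp [pr]
theorem pr_nil : pr ([] : List (Σ i, M i)) = 1 := by simp [pr]

theorem il_cons (x : Σ i, M i) (k : List (Σ i, M i)) : il (x :: k) = il k ++ [⟨x.1, x.2⁻¹⟩] := by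
  simp [il]

theorem pr_il (l : List (Σ i, M i)) : pr (il l) = (pr l)⁻¹ := by
  induction l with
  | nil => simp [il, pr]
  | cons x l ih => rw [il_cons, pr_append, ih, pr_cons, pr_cons, pr_nil]; simp

theorem il_fst (l : List (Σ i, M i)) : (il l).map Sigma.fst = (l.map Sigma.fst).reverse := by
  simp [il, Function.comp_def]

theorem il_length (l : List (Σ i, M i)) : (il l).length = l.length := by simp [il]

theorem il_ne (l : List (Σ i, M i)) (h : ∀ x ∈ l, Sigma.snd x ≠ 1) :
    ∀ x ∈ il l, Sigma.snd x ≠ 1 := by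
  intro x hx
  simp only [il, List.mem_reverse, List.mem_map] at hx
  obtain ⟨y, hy, rfl⟩ := hx
  simpa using h y hy

theorem chain_rev {α : Type*} {l : List α} (h : l.IsChain (· ≠ ·)) : l.reverse.IsChain (· ≠ ·) := by
  rw [List.isChain_reverse]
  exact h.imp fun a b h => h.symm

theorem Red.il {l : List (Σ i, M i)} (h : Red l) : Red (il l) := by
  refine ⟨il_ne l h.1, ?_⟩
  rw [il_fst]; exact chain_rev h.2

theorem Red.tail {x : Σ i, M i} {l : List (Σ i, M i)} (h : Red (x :: l)) : Red l :=
  ⟨fun y hy => h.1 y (List.mem_cons_of_mem _ hy), by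
    have := h.2
    rw [List.map_cons] at this
    exact this.tail⟩

open Classical in
noncomputable def D : List (Σ i, M i) → List (Σ i, M i) → ℕ
  | [], _ => 0
  | _, [] => 0
  | x :: l, y :: k => if x = y then 2 + D l k else if x.1 = y.1 then 1 else 0

theorem D_um (l : List (Σ i, M i)) : ∀ k j, min (D l k) (D k j) ≤ D l j := by
  induction l with
  | nil => intro k j; cases k <;> cases j <;> simp [D]
  | cons x l ih =>
    intro k j
    rcases k with _ | ⟨y, k⟩
    · simp [D]
    rcases j with _ | ⟨z, j⟩
    · simp [D]
    have := ih k j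
    simp only [D]
    split_ifs <;> first | omega | (exfalso; simp_all) | skip

theorem len_key (l : List (Σ i, M i)) (hl : Red l) : ∀ k, Red k →
    len ((pr l)⁻¹ * pr k) + D l k = l.length + k.length := by
  induction l with
  | nil =>
    intro k hk
    simp [pr_nil, len_pr k hk, D]
  | cons x l ih =>
    intro k hk
    rcases k with _ | ⟨y, k⟩
    · rw [pr_nil, mul_one, ← pr_il, len_pr _ hl.il, il_length]; simp [D]
    by_cases hxy : x = y
    · subst hxy
      have h1 := ih hl.tail k hk.tail
      have e : (pr (x :: l))⁻¹ * pr (x :: k) = (pr l)⁻¹ * pr k := by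
        rw [pr_cons, pr_cons]; group
      rw [e]
      simp [D]; omega
    · by_cases hf : x.1 = y.1
      · rcases x with ⟨i, a⟩
        rcases y with ⟨j, b⟩
        simp only at hf
        subst hf
        have hab : a⁻¹ * b ≠ 1 := fun h => hxy (by rw [inv_mul_eq_one.mp h])
        have e : (pr (⟨i, a⟩ :: l))⁻¹ * pr (⟨i, b⟩ :: k) = pr (il l ++ ⟨i, a⁻¹ * b⟩ :: k) := by
          rw [pr_append, pr_il, pr_cons, pr_cons, pr_cons, map_mul, map_inv]; group
        have hr : Red (il l ++ ⟨i, a⁻¹ * b⟩ :: k) := by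
          constructor
          · intro z hz
            rcases List.mem_append.mp hz with h | h
            · exact il_ne l hl.tail.1 z h
            · rcases List.mem_cons.mp h with rfl | h
              · exact hab
              · exact hk.tail.1 z h
          · rw [List.map_append, il_fst, List.map_cons, List.isChain_split]
            refine ⟨?_, ?_⟩
            · have := chain_rev hl.2
              simpa using this
            · have := hk.2
              simpa using this
        rw [e, len_pr _ hr]
        simp [D, hxy, il_length]; omega
      · have e : (pr (x :: l))⁻¹ * pr (y :: k) = pr (il (x :: l) ++ y :: k) := by
          rw [pr_append, pr_il]
        have hr : Red (il (x :: l) ++ y :: k) := by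
          constructor
          · intro z hz
            rcases List.mem_append.mp hz with h | h
            · exact il_ne _ hl.1 z h
            · exact hk.1 z h
          · rw [List.map_append, il_fst, List.isChain_append]
            refine ⟨chain_rev hl.2, hk.2, ?_⟩
            simp
            exact hf
        rw [e, len_pr _ hr]
        simp [D, hxy, hf, il_length]

theorem red_nil : Red ([] : List (Σ i, M i)) := by simp [Red]

theorem red_one {i : ι} {a : M i} (h : a ≠ 1) : Red [(⟨i, a⟩ : Σ i, M i)] := by simp [Red, h]

theorem len_of {i : ι} (a : M i) : len (CoprodI.of a) ≤ 1 := by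
  by_cases h : a = 1
  · subst h
    have := len_pr (M := M) [] red_nil
    rw [pr_nil] at this
    rw [map_one, this]; simp
  · have := len_pr _ (red_one h)
    simp [pr] at this
    exact this.le

end words

theorem fp_coprodI (M : Bool → Type) [∀ i, CommGroup (M i)] :
    FP (Monoid.CoprodI M) (Monoid.CoprodI.of (i := true)).range
      (Monoid.CoprodI.of (i := false)).range len where
  L1 := by
    have := len_pr (M := M) [] red_nil
    rw [pr_nil] at this
    simpa using this
  L0 := fun g hg => by
    obtain ⟨l, hl, rfl⟩ := exists_red g
    rw [len_pr l hl, List.length_eq_zero_iff] at hg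
    rw [hg, pr_nil]
  inv := fun g => by
    obtain ⟨l, hl, rfl⟩ := exists_red g
    rw [← pr_il, len_pr _ hl, len_pr _ hl.il, il_length]
  hyp := fun g h k => by
    obtain ⟨l, hl, rfl⟩ := exists_red g
    obtain ⟨l', hl', rfl⟩ := exists_red h
    obtain ⟨l'', hl'', rfl⟩ := exists_red k
    have h1 := len_key l hl l' hl'
    have h2 := len_key l' hl' l'' hl''
    have h3 := len_key l hl l'' hl''
    have h4 := D_um l l' l''
    rw [len_pr _ hl, len_pr _ hl', len_pr _ hl'']
    omega
  pre := fun g k hk => by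
    obtain ⟨l, hl, rfl⟩ := exists_red g
    rw [len_pr l hl] at hk ⊢
    have ht : Red (l.take k) := ⟨fun x hx => hl.1 x (List.mem_of_mem_take hx), by
      rw [List.map_take]; exact hl.2.take k⟩
    have hd : Red (l.drop k) := ⟨fun x hx => hl.1 x (List.mem_of_mem_drop hx), by
      rw [List.map_drop]; exact hl.2.drop k⟩
    refine ⟨pr (l.take k), ?_, ?_⟩
    · rw [len_pr _ ht]; simp [hk]
    · have e : pr l = pr (l.take k) * pr (l.drop k) := by
        rw [← pr_append, List.take_append_drop]
      rw [e, inv_mul_cancel_left, len_pr _ hd]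
      simp [hk]
  one := fun g hg => by
    obtain ⟨l, hl, rfl⟩ := exists_red g
    rw [len_pr l hl] at hg
    rcases l with _ | ⟨⟨i, a⟩, _ | ⟨y, l⟩⟩
    · left; rw [pr_nil]; exact Subgroup.one_mem _
    · cases i
      · right; exact ⟨a, by simp [pr]⟩
      · left; exact ⟨a, by simp [pr]⟩
    · simp at hg
  LA := by
    rintro _ ⟨a, rfl⟩
    exact len_of a
  LB := by
    rintro _ ⟨a, rfl⟩
    exact len_of a
  AB := by
    rintro _ ⟨a, rfl⟩ _ ⟨b, rfl⟩ ha hb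
    have ha' : a ≠ 1 := by rintro rfl; simp at ha
    have hb' : b ≠ 1 := by rintro rfl; simp at hb
    have : Red [(⟨true, a⟩ : Σ i, M i), ⟨false, b⟩] := by simp [Red, ha', hb']
    have := len_pr _ this
    simpa [pr] using this
  cA := by
    rintro _ ⟨a, rfl⟩ _ ⟨b, rfl⟩
    rw [← map_mul, mul_comm, map_mul]
  cB := by
    rintro _ ⟨a, rfl⟩ _ ⟨b, rfl⟩
    rw [← map_mul, mul_comm, map_mul]

theorem main_abs {G : Type*} [Group G] {A B : Subgroup G} {L : G → ℕ} (F : FP G A B L)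
    (hA : ∃ a ∈ A, a ≠ 1) (hB : ∃ b ∈ B, b ≠ 1) (ht : ∀ a ∈ A, ∃ k : ℕ, k ≠ 0 ∧ a ^ k = 1)
    {p : G × G} (hg : Gen p) :
    ∃ u v, NielsenEquiv p (u, v) ∧ L (u * u) ≤ L u ∧ L (v * v) ≤ L v := by
  have aux : ∀ (A B : Subgroup G), FP G A B L → (∃ b ∈ B, b ≠ 1) → ∀ u v, Gen (u, v) → u ∈ A →
      ∃ u' v', NielsenEquiv (u, v) (u', v') ∧ L (u' * u') ≤ L u' ∧ L (v' * v') ≤ L v' := by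
    intro A B F hB u v hg hu
    obtain ⟨v', h1, h2⟩ := ellCase F hB hg hu
    refine ⟨u, v', h1, ?_, h2⟩
    have h3 := F.LA _ (A.mul_mem hu hu)
    by_cases hu1 : u = 1
    · subst hu1; simp
    · have := L_pos F hu1; omega
  have aux2 : ∀ u v, Gen (u, v) → L (u * u) ≤ L u →
      ∃ u' v', NielsenEquiv (u, v) (u', v') ∧ L (u' * u') ≤ L u' ∧ L (v' * v') ≤ L v' := by
    intro u v hg hu
    obtain ⟨q, hq⟩ := F.ell u hu
    have hc := N_conj hg q
    have hg' := N_gen hc hg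
    rcases F.one _ hq with h | h
    · obtain ⟨u', v', h1, h2⟩ := aux A B F hB _ _ hg' h
      exact ⟨u', v', N_trans hc h1, h2⟩
    · obtain ⟨u', v', h1, h2⟩ := aux B A F.symm hA _ _ hg' h
      exact ⟨u', v', N_trans hc h1, h2⟩
  obtain ⟨⟨u, v⟩, hN, hm⟩ := exists_min (fun p : G × G => L p.1 + L p.2)
    (fun q => NielsenEquiv p q) ⟨p, N_refl p⟩
  have hM : Mn L (u, v) := fun q hq => hm q (N_trans hN hq)
  have hg' := N_gen hN hg
  by_cases hu : L (u * u) ≤ L u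
  · obtain ⟨u', v', h1, h2⟩ := aux2 u v hg' hu
    exact ⟨u', v', N_trans hN h1, h2⟩
  by_cases hv : L (v * v) ≤ L v
  · obtain ⟨u', v', h1, h2⟩ := aux2 v u (N_gen (N_swap _ _) hg') hv
    exact ⟨u', v', N_trans hN (N_trans (N_swap _ _) h1), h2⟩
  exfalso
  have inj := free_inj F hg' hM (by omega) (by omega)
  obtain ⟨a, ha, ha1⟩ := hA
  obtain ⟨k, hk, hak⟩ := ht a ha
  obtain ⟨w, rfl⟩ := hg' a
  apply ha1
  rw [← map_pow] at hak
  have h1 : w ^ k = 1 := inj (by rw [hak, map_one])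
  have h2 : w = 1 := (pow_eq_one_iff_left hk).mp h1
  rw [h2, map_one]

abbrev MM (m n : ℕ) : Bool → Type := fun b => Cyc (bif b then m else n)

theorem cyc_pow (m : ℕ) (a : Cyc m) : a ^ m = 1 := by
  rw [← toAdd_eq_zero]
  simp

theorem main_coprodI (m n : ℕ) (hm : 1 < m) (hn : 1 < n)
    (p : Monoid.CoprodI (MM m n) × Monoid.CoprodI (MM m n)) (hg : Gen p) :
    ∃ u v, NielsenEquiv p (u, v) ∧ u ^ m = 1 ∧ v ^ n = 1 := by
  have F := fp_coprodI (MM m n)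
  have hne : ∀ i, ∃ a : MM m n i, a ≠ 1 := by
    intro i
    have : 1 < (bif i then m else n) := by cases i <;> assumption
    haveI : Fact (1 < (bif i then m else n)) := ⟨this⟩
    exact exists_ne 1
  have hinj := fun i => Monoid.CoprodI.of_injective (M := MM m n) i
  have hR : ∀ i, ∃ a ∈ (Monoid.CoprodI.of (M := MM m n) (i := i)).range, a ≠ 1 := by
    intro i
    obtain ⟨a, ha⟩ := hne i
    exact ⟨_, ⟨a, rfl⟩, fun h => ha (hinj i (by rw [h, map_one]))⟩
  have hpow : ∀ i, ∀ a ∈ (Monoid.CoprodI.of (M := MM m n) (i := i)).range,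
      a ^ (bif i then m else n) = 1 := by
    rintro i _ ⟨a, rfl⟩
    rw [← map_pow, cyc_pow, map_one]
  have hcp : ∀ (i : Bool) (q x : Monoid.CoprodI (MM m n)),
      q⁻¹ * x * q ∈ (Monoid.CoprodI.of (M := MM m n) (i := i)).range →
      x ^ (bif i then m else n) = 1 := by
    intro i q x h
    have h1 := hpow i _ h
    have e : q⁻¹ * x * q = q⁻¹ * x * q⁻¹⁻¹ := by simp
    rw [e, conj_pow] at h1
    exact conj_eq_one_iff.mp h1
  -- projection to the other factor
  have hproj : ∀ (i : Bool) (q r x y : Monoid.CoprodI (MM m n)),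
      q⁻¹ * x * q ∈ (Monoid.CoprodI.of (M := MM m n) (i := i)).range →
      r⁻¹ * y * r ∈ (Monoid.CoprodI.of (M := MM m n) (i := i)).range → ¬ Gen (x, y) := by
    rintro i q r x y ⟨a, ha⟩ ⟨b, hb⟩ hG
    obtain ⟨c, hc⟩ := hne (!i)
    let π := Monoid.CoprodI.lift (Pi.mulSingle (!i) (MonoidHom.id (MM m n (!i))))
    have hπ : ∀ a : MM m n i, π (Monoid.CoprodI.of a) = 1 := by
      intro a
      have hi : i ≠ !i := by cases i <;> simp
      simp [π, Pi.mulSingle_eq_of_ne hi]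
    have hx : π x = 1 := by
      have := congrArg π ha
      rw [hπ, map_mul, map_mul, map_inv] at this
      simpa using this.symm
    have hy : π y = 1 := by
      have := congrArg π hb
      rw [hπ, map_mul, map_mul, map_inv] at this
      simpa using this.symm
    have h1 : π.comp (eta (x, y)) = 1 := eta_ext (by simp [hx]) (by simp [hy])
    obtain ⟨w, hw⟩ := hG (Monoid.CoprodI.of c)
    have h2 := DFunLike.congr_fun h1 w
    simp only [MonoidHom.comp_apply, hw, MonoidHom.one_apply] at h2
    simp [π] at h2
    exact hc h2
  obtain ⟨u, v, hN, hu, hv⟩ := main_abs F (hR true) (hR false)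
    (fun a ha => ⟨m, by omega, hpow true a ha⟩) hg
  obtain ⟨q, hq⟩ := F.ell u hu
  obtain ⟨r, hr⟩ := F.ell v hv
  have hG := N_gen hN hg
  rcases F.one _ hq with hq | hq <;> rcases F.one _ hr with hr | hr
  · exact absurd hG (hproj true q r u v hq hr)
  · exact ⟨u, v, hN, hcp true q u hq, hcp false r v hr⟩
  · exact ⟨v, u, N_trans hN (N_swap _ _), hcp true r v hr, hcp false q u hq⟩
  · exact absurd hG (hproj false q r u v hq hr)

theorem cyclic_case {G : Type*} [Group G] (x : G) : ∀ (k i j : ℕ), i + j = k →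
    ∃ l : ℕ, NielsenEquiv (x ^ i, x ^ j) (x ^ l, 1) := by
  intro k
  induction k using Nat.strong_induction_on with
  | _ k ih =>
    have main : ∀ i j : ℕ, i + j = k → i ≤ j →
        ∃ l : ℕ, NielsenEquiv (x ^ i, x ^ j) (x ^ l, 1) := by
      intro i j hk hij
      rcases Nat.eq_zero_or_pos i with rfl | hi
      · exact ⟨j, by simpa using N_swap (1 : G) (x ^ j)⟩
      · obtain ⟨l, hl⟩ := ih (i + (j - i)) (by omega) i (j - i) rfl
        refine ⟨l, N_trans (N_symm ?_) hl⟩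
        have := N_mul (x ^ i) (x ^ (j - i))
        rwa [← pow_add, Nat.add_sub_cancel' hij] at this
    intro i j hk
    rcases le_total i j with h | h
    · exact main i j hk h
    · obtain ⟨l, hl⟩ := main j i (by omega) h
      exact ⟨l, N_trans (N_swap _ _) hl⟩

theorem cyc_gen (m : ℕ) (hm : 0 < m) (a : Cyc m) : ∃ i : ℕ, a = (Multiplicative.ofAdd 1) ^ i := by
  haveI : NeZero m := ⟨by omega⟩
  refine ⟨(Multiplicative.toAdd a).val, ?_⟩
  rw [← ofAdd_nsmul]
  simp

theorem main_coprod (m n : ℕ) (hm : 0 < m) (hn : 0 < n)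
    (p : Monoid.Coprod (Cyc m) (Cyc n) × Monoid.Coprod (Cyc m) (Cyc n)) (hg : Gen p) :
    ∃ u v, NielsenEquiv p (u, v) ∧ u ^ m = 1 ∧ v ^ n = 1 := by
  rcases p with ⟨g1, g2⟩
  by_cases hm1 : m = 1
  · subst hm1
    have key : ∀ g : Monoid.Coprod (Cyc 1) (Cyc n), ∃ i : ℕ,
        g = (Monoid.Coprod.inr (Multiplicative.ofAdd 1)) ^ i := by
      intro g
      induction g using Monoid.Coprod.induction_on with
      | inl a => exact ⟨0, by rw [Subsingleton.elim a 1]; simp⟩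
      | inr b =>
        obtain ⟨i, rfl⟩ := cyc_gen n hn b
        exact ⟨i, by simp⟩
      | mul x y hx hy =>
        obtain ⟨i, rfl⟩ := hx
        obtain ⟨j, rfl⟩ := hy
        exact ⟨i + j, by rw [pow_add]⟩
    obtain ⟨i, rfl⟩ := key g1
    obtain ⟨j, rfl⟩ := key g2
    obtain ⟨l, hl⟩ := cyclic_case (Monoid.Coprod.inr (Multiplicative.ofAdd 1) : Monoid.Coprod (Cyc 1) (Cyc n)) _ i j rfl
    have hl2 := N_trans hl (N_swap _ _)
    refine ⟨_, _, hl2, by simp, ?_⟩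
    rw [← map_pow, ← map_pow, cyc_pow, map_one]
  by_cases hn1 : n = 1
  · subst hn1
    have key : ∀ g : Monoid.Coprod (Cyc m) (Cyc 1), ∃ i : ℕ,
        g = (Monoid.Coprod.inl (Multiplicative.ofAdd 1)) ^ i := by
      intro g
      induction g using Monoid.Coprod.induction_on with
      | inr a => exact ⟨0, by rw [Subsingleton.elim a 1]; simp⟩
      | inl b =>
        obtain ⟨i, rfl⟩ := cyc_gen m hm b
        exact ⟨i, by simp⟩
      | mul x y hx hy =>
        obtain ⟨i, rfl⟩ := hx
        obtain ⟨j, rfl⟩ := hy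
        exact ⟨i + j, by rw [pow_add]⟩
    obtain ⟨i, rfl⟩ := key g1
    obtain ⟨j, rfl⟩ := key g2
    obtain ⟨l, hl⟩ := cyclic_case (Monoid.Coprod.inl (Multiplicative.ofAdd 1) : Monoid.Coprod (Cyc m) (Cyc 1)) _ i j rfl
    refine ⟨_, _, hl, ?_, by simp⟩
    rw [← map_pow, ← map_pow, cyc_pow, map_one]
  let f : Monoid.Coprod (Cyc m) (Cyc n) →* Monoid.CoprodI (MM m n) :=
    Monoid.Coprod.lift (Monoid.CoprodI.of (M := MM m n) (i := true))
      (Monoid.CoprodI.of (M := MM m n) (i := false))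
  let g : Monoid.CoprodI (MM m n) →* Monoid.Coprod (Cyc m) (Cyc n) :=
    Monoid.CoprodI.lift (fun b => match b with
      | true => (Monoid.Coprod.inl : Cyc m →* Monoid.Coprod (Cyc m) (Cyc n))
      | false => (Monoid.Coprod.inr : Cyc n →* Monoid.Coprod (Cyc m) (Cyc n)))
  have hgf : g.comp f = MonoidHom.id _ := by
    apply Monoid.Coprod.hom_ext
    · ext a; simp [f, g]
    · ext a; simp [f, g]
  have hfg : f.comp g = MonoidHom.id _ := by
    apply Monoid.CoprodI.ext_hom
    intro i
    cases i
    · ext a; simp [f, g]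
    · ext a; simp [f, g]
  have hf : Function.Surjective f := fun x => ⟨g x, DFunLike.congr_fun hfg x⟩
  have hG : Gen (f g1, f g2) := by
    have : eta (f g1, f g2) = f.comp (eta (g1, g2)) := eta_ext (by simp) (by simp)
    unfold Gen
    rw [this]
    exact hf.comp hg
  obtain ⟨u, v, hN, hu, hv⟩ := main_coprodI m n (by omega) (by omega) _ hG
  have hN' := N_map g hN
  have e : ∀ x, g (f x) = x := fun x => DFunLike.congr_fun hgf x
  simp only [e] at hN'
  exact ⟨g u, g v, hN', by rw [← map_pow, hu, map_one], by rw [← map_pow, hv, map_one]⟩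

end FPx

/-- for `G = C_m ∗ C_n`, a homomorphic image `H` of `G` and a generating
pair `(h1,h2)` of `H`, the pair `(h1,h2)` lifts to a generating pair of `G` along
some homomorphism `G → H` if and only if its Nielsen equivalence class contains a
generating pair `(h̃1,h̃2)` with `h̃1^m = h̃2^n = 1`. -/
theorem stmt6 (m n : ℕ) (hm : 0 < m) (hn : 0 < n)
    (H : Type) [Group H]
    (hH : ∃ φ : Monoid.Coprod (Cyc m) (Cyc n) →* H, Function.Surjective φ)
    (h1 h2 : H) (hgen : Subgroup.closure {h1, h2} = ⊤) :
    (∃ (θ : Monoid.Coprod (Cyc m) (Cyc n) →* H) (g1 g2 : Monoid.Coprod (Cyc m) (Cyc n)),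
        Subgroup.closure {g1, g2} = ⊤ ∧ θ g1 = h1 ∧ θ g2 = h2) ↔
    (∃ h1' h2' : H, Subgroup.closure {h1', h2'} = ⊤ ∧
        NielsenEquiv (h1, h2) (h1', h2') ∧ h1' ^ m = 1 ∧ h2' ^ n = 1) := by

  constructor
  · rintro ⟨θ, g1, g2, hg, rfl, rfl⟩
    obtain ⟨u, v, hN, hu, hv⟩ := FPx.main_coprod m n hm hn (g1, g2) ((FPx.gen_iff _).mpr hg)
    have hN' := FPx.N_map θ hN
    refine ⟨θ u, θ v, ?_, hN', by rw [← map_pow, hu, map_one], by rw [← map_pow, hv, map_one]⟩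
    exact (FPx.gen_iff (θ u, θ v)).mp (FPx.N_gen hN' ((FPx.gen_iff _).mpr hgen))
  · rintro ⟨h1', h2', hg', hN, h1m, h2n⟩
    have key : ∀ (k : ℕ) (x : H), 0 < k → x ^ k = 1 →
        ∃ f : Cyc k →* H, f (Multiplicative.ofAdd 1) = x := by
      intro k x hk hx
      let f0 : ℤ →+ Additive H := zmultiplesHom _ (Additive.ofMul x)
      have h0 : f0 k = 0 := by
        simp only [f0, zmultiplesHom_apply, natCast_zsmul, ← ofMul_pow, hx, ofMul_one]
      refine ⟨AddMonoidHom.toMultiplicativeLeft (ZMod.lift k ⟨f0, h0⟩), ?_⟩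
      have h1 := ZMod.lift_coe k ⟨f0, h0⟩ 1
      have h2 : f0 1 = Additive.ofMul x := by simp [f0]
      rw [Int.cast_one] at h1
      exact congrArg Additive.toMul (h1.trans h2)
    obtain ⟨f1, hf1⟩ := key m h1' hm h1m
    obtain ⟨f2, hf2⟩ := key n h2' hn h2n
    let a : Monoid.Coprod (Cyc m) (Cyc n) := Monoid.Coprod.inl (Multiplicative.ofAdd 1)
    let b : Monoid.Coprod (Cyc m) (Cyc n) := Monoid.Coprod.inr (Multiplicative.ofAdd 1)
    let θ := Monoid.Coprod.lift f1 f2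
    have ha : θ a = h1' := by simp [θ, a, hf1]
    have hb : θ b = h2' := by simp [θ, b, hf2]
    have hG : Subgroup.closure {a, b} = ⊤ := by
      rw [eq_top_iff]
      intro g _
      induction g using Monoid.Coprod.induction_on with
      | inl c =>
        obtain ⟨i, rfl⟩ := FPx.cyc_gen m hm c
        rw [map_pow]
        exact Subgroup.pow_mem _ (Subgroup.subset_closure (by simp [a])) _
      | inr c =>
        obtain ⟨i, rfl⟩ := FPx.cyc_gen n hn c
        rw [map_pow]
        exact Subgroup.pow_mem _ (Subgroup.subset_closure (by simp [b])) _
      | mul x y hx hy => exact Subgroup.mul_mem _ (hx trivial) (hy trivial)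
    obtain ⟨α, hα⟩ := FPx.N_symm hN
    have hNe : NielsenEquiv (a, b)
        (eta (a, b) (α (FreeGroup.of 0)), eta (a, b) (α (FreeGroup.of 1))) :=
      ⟨α, FPx.eta_ext (by simp) (by simp)⟩
    have hθ : θ.comp (eta (a, b)) = eta (h1', h2') :=
      FPx.eta_ext (by simp [ha]) (by simp [hb])
    refine ⟨θ, eta (a, b) (α (FreeGroup.of 0)), eta (a, b) (α (FreeGroup.of 1)), ?_, ?_, ?_⟩
    · exact (FPx.gen_iff (_, _)).mp (FPx.N_gen hNe ((FPx.gen_iff (a, b)).mpr hG))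
    · have h := DFunLike.congr_fun hα (FreeGroup.of 0)
      rw [← hθ] at h
      simpa using h.symm
    · have h := DFunLike.congr_fun hα (FreeGroup.of 1)
      rw [← hθ] at h
      simpa using h.symm
end

section
/- Let H be a group and let (h1,h2) and (h1',h2') be generating pairs of H that are Nielsen equivalent. Then there exists g ∈ H such that [h1',h2'] = g⁻¹[h1,h2]g or [h1',h2'] = g⁻¹[h2,h1]g. -/
/-- The commutator `[a,b] = a⁻¹b⁻¹ab`. -/
def commE {H : Type*} [Group H] (a b : H) : H := a⁻¹ * b⁻¹ * a * b

namespace NielsenAux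
open FreeGroup

abbrev F2 := FreeGroup (Fin 2)
abbrev Lt := Fin 2 × Bool

def cp : List Lt → List Lt → ℕ
  | a :: l, b :: m => if a = b then cp l m + 1 else 0
  | _, _ => 0

lemma cp_comm (l m : List Lt) : cp l m = cp m l := by
  induction l generalizing m with
  | nil => cases m <;> simp [cp]
  | cons a l ih => cases m with
    | nil => simp [cp]
    | cons b m => simp only [cp, ih m, eq_comm]

lemma cp_min (l m n : List Lt) : min (cp l m) (cp m n) ≤ cp l n := by
  induction l generalizing m n with
  | nil => cases m <;> simp [cp]
  | cons a l ih => cases m with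
    | nil => simp [cp]
    | cons b m => cases n with
      | nil => simp [cp]
      | cons c n =>
        have := ih m n
        simp only [cp]
        split_ifs <;> first | omega | simp_all

lemma cp_get (l m : List Lt) (i : ℕ) (h : i < cp l m) : l[i]? = m[i]? := by
  induction l generalizing m i with
  | nil => simp [cp] at h
  | cons a l ih => cases m with
    | nil => simp [cp] at h
    | cons b m =>
      simp only [cp] at h
      split_ifs at h with hab
      · subst hab
        cases i with
        | zero => simp
        | succ i => simpa using ih m i (by omega)
      · omega

lemma red_inv {l : List Lt} (h : FreeGroup.IsReduced l) : FreeGroup.IsReduced (invRev l) := by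
  have : (mk l)⁻¹.toWord = invRev l := by
    rw [toWord_inv, toWord_mk, h.reduce_eq]
  rw [← this]; exact isReduced_toWord

lemma norm_cp (l m : List Lt) (hl : FreeGroup.IsReduced l) (hm : FreeGroup.IsReduced m) :
    FreeGroup.norm ((mk l)⁻¹ * mk m) + 2 * cp l m = l.length + m.length := by
  induction l generalizing m with
  | nil =>
    have : FreeGroup.norm (mk m) = m.length := by simp [FreeGroup.norm, hm.reduce_eq]
    have h1 : (mk ([] : List Lt)) = 1 := rfl
    rw [h1]; simp [cp, this]
  | cons a l ih => cases m with
    | nil =>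
      have : FreeGroup.norm (mk (a :: l)) = (a :: l).length := by
        rw [FreeGroup.norm, toWord_mk, hl.reduce_eq]
      have h1 : (mk ([] : List Lt)) = 1 := rfl
      rw [h1, mul_one, norm_inv_eq, this]; simp [cp]
    | cons b m =>
      by_cases hab : a = b
      · subst hab
        have h1 : FreeGroup.IsReduced l := hl.infix ⟨[a], [], by simp⟩
        have h2 : FreeGroup.IsReduced m := hm.infix ⟨[a], [], by simp⟩
        have := ih m h1 h2
        have e : (mk (a :: l))⁻¹ * mk (a :: m) = (mk l)⁻¹ * mk m := by
          have e1 : mk (a :: l) = mk [a] * mk l := by rw [mul_mk]; rfl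
          have e2 : mk (a :: m) = mk [a] * mk m := by rw [mul_mk]; rfl
          rw [e1, e2]; group
        rw [e]; simp only [cp, if_true, List.length_cons]; omega
      · have hr : FreeGroup.IsReduced (invRev (a :: l) ++ (b :: m)) := by
          unfold FreeGroup.IsReduced
          rw [List.isChain_append]
          refine ⟨red_inv hl, hm, ?_⟩
          intro x hx y hy
          simp [invRev] at hx hy
          subst hx hy
          intro h3
          rcases a with ⟨a, a'⟩
          rcases b with ⟨b, b'⟩
          simp at h3 hab ⊢
          have := hab h3
          revert this
          cases a' <;> cases b' <;> simp
        rw [inv_mk, mul_mk, FreeGroup.norm, toWord_mk, hr.reduce_eq]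
        simp [cp, hab]

def p (g h : F2) : ℕ := cp g.toWord h.toWord

lemma p_comm (g h : F2) : p g h = p h g := cp_comm _ _
lemma p_min (g h k : F2) : min (p g h) (p h k) ≤ p g k := cp_min _ _ _
lemma p_norm (g h : F2) : FreeGroup.norm (g⁻¹ * h) + 2 * p g h = FreeGroup.norm g + FreeGroup.norm h := by
  have := norm_cp g.toWord h.toWord isReduced_toWord isReduced_toWord
  rw [mk_toWord, mk_toWord] at this
  exact this

lemma p_norm' (g h : F2) : FreeGroup.norm (g * h) + 2 * p g⁻¹ h = FreeGroup.norm g + FreeGroup.norm h := by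
  have := p_norm g⁻¹ h
  simpa using this

lemma p_sq (g : F2) (hg : g ≠ 1) : 2 * p g g⁻¹ < FreeGroup.norm g := by
  by_contra hc
  push Not at hc
  have hpos : FreeGroup.norm g ≠ 0 := by rwa [Ne, FreeGroup.norm_eq_zero]
  have key : ∀ i, i < p g g⁻¹ → ∀ hi : i < g.toWord.length,
      g.toWord[i] = ((g.toWord[g.toWord.length - 1 - i]).1, !(g.toWord[g.toWord.length - 1 - i]).2) := by
    intro i h hi
    have := cp_get _ _ i h
    rw [toWord_inv, List.getElem?_eq_getElem hi,
      List.getElem?_eq_getElem (by simpa using hi)] at this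
    simp [invRev] at this
    exact this
  have hred : FreeGroup.IsReduced g.toWord := isReduced_toWord
  unfold FreeGroup.norm at hc hpos
  obtain ⟨k, hk | hk⟩ := Nat.even_or_odd' g.toWord.length
  · have h1 := key (k-1) (by omega) (by omega)
    have e : g.toWord.length - 1 - (k-1) = (k - 1) + 1 := by omega
    simp only [e] at h1
    have h2 := (List.isChain_iff_getElem.1 hred) (k-1) (by omega)
    rw [h1] at h2
    simp at h2
  · have h1 := key k (by omega) (by omega)
    have e : g.toWord.length - 1 - k = k := by omega
    simp only [e] at h1
    have := congrArg Prod.snd h1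
    simp at this

lemma half (b : F2) (n : ℕ) (h : FreeGroup.norm b = 2 * n) :
    ∃ r q : F2, b = r * q ∧ FreeGroup.norm r = n ∧ FreeGroup.norm q = n := by
  refine ⟨mk (b.toWord.take n), mk (b.toWord.drop n), ?_, ?_⟩
  · rw [mul_mk, List.take_append_drop, mk_toWord]
  · have e : b = mk (b.toWord.take n) * mk (b.toWord.drop n) := by
      rw [mul_mk, List.take_append_drop, mk_toWord]
    have h1 : FreeGroup.norm (mk (b.toWord.take n)) ≤ _ := norm_mk_le
    have h2 : FreeGroup.norm (mk (b.toWord.drop n)) ≤ _ := norm_mk_le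
    have h3 := norm_mul_le (mk (b.toWord.take n)) (mk (b.toWord.drop n))
    rw [← e] at h3
    unfold FreeGroup.norm at h
    simp only [List.length_take, List.length_drop] at h1 h2
    unfold FreeGroup.norm at *
    omega

def X : F2 := of 0
def Y : F2 := of 1

def Q (u v : F2) : Prop := IsConj (commE X Y) (commE u v) ∨ IsConj (commE Y X) (commE u v)

def Bad (u v : F2) : Prop := (X ∈ Subgroup.closure {u, v} ∧ Y ∈ Subgroup.closure {u, v}) ∧ ¬ Q u v

lemma commE_inv (a b : F2) : (commE a b)⁻¹ = commE b a := by unfold commE; group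

lemma isConj_inv' {a b : F2} (h : IsConj a b) : IsConj a⁻¹ b⁻¹ := by
  obtain ⟨c, hc⟩ := isConj_iff.1 h
  exact isConj_iff.2 ⟨c, by rw [← hc]; group⟩

lemma Q_of_inv {u v u' v' : F2} (h : IsConj (commE v u) (commE u' v')) (hq : Q u v) : Q u' v' := by
  rcases hq with hq | hq
  · right
    have := isConj_inv' hq
    rw [commE_inv, commE_inv] at this
    exact this.trans h
  · left
    have := isConj_inv' hq
    rw [commE_inv, commE_inv] at this
    exact this.trans h

lemma Q_of {u v u' v' : F2} (h : IsConj (commE u v) (commE u' v')) (hq : Q u v) : Q u' v' :=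
  hq.imp (fun a => a.trans h) (fun a => a.trans h)

lemma cl_mono {u v u' v' : F2} (h1 : u ∈ Subgroup.closure {u', v'})
    (h2 : v ∈ Subgroup.closure {u', v'}) :
    Subgroup.closure {u, v} ≤ Subgroup.closure {u', v'} := by
  rw [Subgroup.closure_le]
  rintro z (rfl | rfl)
  · exact h1
  · exact h2

lemma mem1 (u v : F2) : u ∈ Subgroup.closure {u, v} := Subgroup.subset_closure (by simp)
lemma mem2 (u v : F2) : v ∈ Subgroup.closure {u, v} := Subgroup.subset_closure (by simp)

lemma Bad.swap {u v : F2} (h : Bad u v) : Bad v u := by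
  refine ⟨by rw [Set.pair_comm]; exact h.1, fun hq => h.2 (Q_of_inv (IsConj.refl _) hq)⟩

lemma Bad.inv {u v : F2} (h : Bad u v) : Bad u⁻¹ v := by
  have hc := cl_mono (u := u) (v := v) (u' := u⁻¹) (v' := v)
    (by simpa using inv_mem (mem1 u⁻¹ v)) (mem2 _ _)
  refine ⟨⟨hc h.1.1, hc h.1.2⟩, fun hq => h.2 (Q_of_inv ?_ hq)⟩
  exact isConj_iff.2 ⟨u⁻¹, by unfold commE; group⟩

lemma Bad.mul {u v : F2} (h : Bad u v) : Bad (u * v) v := by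
  have hc := cl_mono (u := u) (v := v) (u' := u * v) (v' := v)
    (by simpa using mul_mem (mem1 (u * v) v) (inv_mem (mem2 (u * v) v))) (mem2 _ _)
  refine ⟨⟨hc h.1.1, hc h.1.2⟩, fun hq => h.2 (Q_of ?_ hq)⟩
  exact isConj_iff.2 ⟨v, by unfold commE; group⟩

lemma XY_ncomm : X * Y ≠ Y * X := by decide

lemma conj_all {u v : F2} (h : Subgroup.closure {u, v} = ⊤) (q : F2) :
    Subgroup.closure {q * u * q⁻¹, q * v * q⁻¹} = ⊤ := by
  have := congrArg (Subgroup.map (MulAut.conj q).toMonoidHom) h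
  rw [MonoidHom.map_closure, Set.image_pair, Subgroup.map_top_of_surjective _ (MulAut.conj q).surjective] at this
  simpa using this

lemma top_of {u v : F2} (h : X ∈ Subgroup.closure {u, v} ∧ Y ∈ Subgroup.closure {u, v}) :
    Subgroup.closure {u, v} = ⊤ := by
  rw [eq_top_iff, ← closure_range_of, Subgroup.closure_le]
  rintro _ ⟨i, rfl⟩
  fin_cases i
  · exact h.1
  · exact h.2

lemma Bad.conj {u v : F2} (h : Bad u v) (q : F2) : Bad (q * u * q⁻¹) (q * v * q⁻¹) := by
  have := conj_all (top_of h.1) q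
  refine ⟨by simp [this], fun hq => h.2 (Q_of ?_ hq)⟩
  exact isConj_iff.2 ⟨q⁻¹, by unfold commE; group⟩

lemma Bad.ne_one {u v : F2} (h : Bad u v) : u ≠ 1 := by
  rintro rfl
  obtain ⟨⟨h1, h2⟩, -⟩ := h
  rw [Subgroup.closure_insert_one, Subgroup.mem_closure_singleton] at h1 h2
  obtain ⟨m, hm⟩ := h1
  obtain ⟨n, hn⟩ := h2
  apply XY_ncomm
  rw [← hm, ← hn, ← zpow_add, ← zpow_add, add_comm]

def Min (u v : F2) : Prop := Bad u v ∧ ∀ u' v', Bad u' v' → FreeGroup.norm u + FreeGroup.norm v ≤ FreeGroup.norm u' + FreeGroup.norm v'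

lemma Min.swap {u v : F2} (h : Min u v) : Min v u :=
  ⟨h.1.swap, fun u' v' hb => by have := h.2 u' v' hb; omega⟩

lemma Min.inv {u v : F2} (h : Min u v) : Min u⁻¹ v :=
  ⟨h.1.inv, fun u' v' hb => by have := h.2 u' v' hb; rw [norm_inv_eq]; omega⟩

lemma Min.inv2 {u v : F2} (h : Min u v) : Min u v⁻¹ := h.swap.inv.swap

lemma Min.n1 {u v : F2} (h : Min u v) : 2 * p u v ≤ FreeGroup.norm v := by
  have h1 := h.2 _ _ h.1.inv.mul
  have := p_norm u v
  omega

lemma Min.n2 {u b : F2} (h : Min u b) : p u b + p u b⁻¹ < FreeGroup.norm b := by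
  by_contra hc
  have h1 := h.n1
  have h2 := h.inv2.n1
  have h3 := p_sq b h.1.swap.ne_one
  have h4 := p_min b u b⁻¹
  rw [p_comm b u] at h4
  rw [norm_inv_eq] at h2
  omega

lemma Min.n3 {u b : F2} (h : Min u b) : p u⁻¹ b + p u b⁻¹ < FreeGroup.norm b := by
  by_contra hc
  have h1 := h.inv.n1
  have h2 := h.inv2.n1
  rw [norm_inv_eq] at h2
  obtain ⟨r, q, hb, hr, hq⟩ := half b (p u⁻¹ b) (by omega)
  set n := p u⁻¹ b with hn
  have hbn : FreeGroup.norm b ≠ 0 := by rw [Ne, FreeGroup.norm_eq_zero]; exact h.1.swap.ne_one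
  -- r is a prefix of b
  have a1 := p_norm b r
  have e1 : b⁻¹ * r = q⁻¹ := by rw [hb]; group
  rw [e1, norm_inv_eq] at a1
  have a2 := p_min u⁻¹ b r
  have a3 := p_norm b⁻¹ q⁻¹
  have e2 : b⁻¹⁻¹ * q⁻¹ = r := by rw [hb]; group
  rw [e2, norm_inv_eq, norm_inv_eq] at a3
  have a4 := p_min u b⁻¹ q⁻¹
  have a5 := p_norm' q u
  rw [p_comm] at a5
  have a6 := p_norm (q * u)⁻¹ u⁻¹
  have e3 : (q * u)⁻¹⁻¹ * u⁻¹ = q := by group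
  rw [e3, norm_inv_eq, norm_inv_eq] at a6
  have a7 := p_min (q * u)⁻¹ u⁻¹ r
  have a8 := p_norm' (q * u) r
  have a9 := h.2 _ _ (h.1.mul.conj q)
  have e4 : q * (u * b) * q⁻¹ = q * u * r := by rw [hb]; group
  have e5 : q * b * q⁻¹ = q * r := by rw [hb]; group
  rw [e4, e5] at a9
  have a10 := norm_mul_le q r
  have a11 : 2 * n ≤ FreeGroup.norm u := by
    have := h.swap.inv2.n1
    rw [norm_inv_eq, p_comm] at this
    exact this
  omega

def E (u v : F2) (a : Lt) : F2 := cond a.2 (![u, v] a.1) (![u, v] a.1)⁻¹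

def bar (a : Lt) : Lt := (a.1, !a.2)

lemma E_bar (u v : F2) (a : Lt) : E u v (bar a) = (E u v a)⁻¹ := by
  rcases a with ⟨i, _ | _⟩ <;> simp [E, bar]

lemma Min.E {u v : F2} (h : Min u v) (a b : Lt) (hab : a.1 ≠ b.1) :
    Min (E u v a) (E u v b) := by
  rcases a with ⟨i, e⟩
  rcases b with ⟨j, f⟩
  fin_cases i <;> fin_cases j <;> simp at hab <;> cases e <;> cases f <;> simp [NielsenAux.E]
  · exact h.inv.inv2
  · exact h.inv
  · exact h.inv2
  · exact h
  · exact h.swap.inv.inv2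
  · exact h.swap.inv
  · exact h.swap.inv2
  · exact h.swap

lemma E_ne {u v : F2} (h : Min u v) (a : Lt) : E u v a ≠ 1 :=
  (h.E a (a.1 + 1, true) (by rcases a with ⟨i, e⟩; fin_cases i <;> simp)).1.ne_one

lemma two_cases (a b : Lt) : a = b ∨ a = bar b ∨ a.1 ≠ b.1 := by
  revert a b; decide

lemma fin2 (a b c : Fin 2) (h1 : a ≠ b) (h2 : c ≠ b) : a = c := by omega

lemma E_n1 {u v : F2} (h : Min u v) (s b : Lt) (hs : s ≠ b) :
    2 * p (E u v s) (E u v b) ≤ FreeGroup.norm (E u v b) := by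
  rcases two_cases s b with h1 | h1 | h1
  · exact absurd h1 hs
  · have := p_sq _ (E_ne h b)
    rw [h1, E_bar, p_comm]; omega
  · exact (h.E s b h1).n1

lemma E_n2 {u v : F2} (h : Min u v) (s b c : Lt) (hs : s ≠ b) (hc : c ≠ bar b) :
    p (E u v s) (E u v b) + p (E u v (bar b)) (E u v c) < FreeGroup.norm (E u v b) := by
  have a1 := E_n1 h s b hs
  have a2 := E_n1 h c (bar b) hc
  have a3 := p_sq _ (E_ne h b)
  rw [p_comm (E u v (bar b))]
  rw [E_bar, norm_inv_eq] at a2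
  rw [E_bar]
  rcases two_cases s b with h1 | h1 | h1
  · exact absurd h1 hs
  · rw [h1, E_bar, p_comm (E u v b)⁻¹ (E u v b)]; omega
  rcases two_cases c b with h2 | h2 | h2
  · rw [h2]
    rw [h2] at a2
    omega
  · exact absurd h2 hc
  have h3 := fin2 _ _ _ h1 h2
  have hm := h.E c b h2
  rcases two_cases s c with h4 | h4 | h4
  · rw [h4]; exact hm.n2
  · rw [h4, E_bar]; exact hm.n3
  · exact absurd h3 h4

lemma word {u v : F2} (h : Min u v) (l : List Lt) (a s : Lt) (hr : FreeGroup.IsReduced (a :: l))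
    (hs : s ≠ a) :
    p (E u v s) (((a :: l).map (E u v)).prod) ≤ p (E u v s) (E u v a) ∧
    l.length + 1 + p (E u v s) (E u v a) ≤ FreeGroup.norm (((a :: l).map (E u v)).prod) := by
  induction l generalizing a s with
  | nil =>
    have h1 := E_n1 h s a hs
    have h2 : FreeGroup.norm (E u v a) ≠ 0 := by rw [Ne, FreeGroup.norm_eq_zero]; exact E_ne h a
    simp
    omega
  | cons b l ih =>
    rw [FreeGroup.isReduced_cons_cons] at hr
    have hb : bar a ≠ b := by
      rintro rfl
      have := hr.1 rfl
      revert this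
      simp [bar]
    obtain ⟨i1, i2⟩ := ih b (bar a) hr.2 hb
    rw [List.map_cons, List.prod_cons]
    set W := ((b :: l).map (E u v)).prod
    have h1 := E_n2 h s a b hs hb.symm
    have h2 := p_norm (E u v a) (E u v a * W)
    rw [inv_mul_cancel_left] at h2
    have h3 := p_norm' (E u v a) W
    rw [← E_bar] at h3
    have h4 := p_min (E u v s) (E u v a * W) (E u v a)
    have h5 := p_min (E u v s) (E u v a) (E u v a * W)
    rw [p_comm (E u v a * W)] at h4
    simp only [List.length_cons]
    constructor <;> omega

lemma word_len {u v : F2} (h : Min u v) (w : F2) : FreeGroup.norm w ≤ FreeGroup.norm (eta (u, v) w) := by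
  have e : eta (u, v) w = (w.toWord.map (E u v)).prod := by
    conv_lhs => rw [← mk_toWord (x := w)]
    rw [eta, lift_mk]
    rfl
  rw [e]
  have hr : FreeGroup.IsReduced w.toWord := isReduced_toWord
  unfold FreeGroup.norm at *
  generalize w.toWord = l at *
  cases l with
  | nil => simp
  | cons a l =>
    have := (word h l a (bar a) hr (by simp [bar, Prod.ext_iff])).2
    unfold FreeGroup.norm at this
    simp only [List.length_cons]
    omega

lemma gen_letter {u v : F2} (h : Min u v) (i : Fin 2) : ∃ a : Lt, (of i : F2) = E u v a := by
  have ht := top_of h.1.1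
  have hs : Function.Surjective (eta (u, v)) := by
    rw [eta, lift_surjective_iff_closure_range_eq_top, ← ht]
    congr 1
    simp [Matrix.range_cons, Set.pair_comm]
  obtain ⟨w, hw⟩ := hs (of i)
  have h1 := word_len h w
  rw [hw, norm_of] at h1
  have e : eta (u, v) w = (w.toWord.map (E u v)).prod := by
    conv_lhs => rw [← mk_toWord (x := w)]
    rw [eta, lift_mk]
    rfl
  rw [hw] at e
  unfold FreeGroup.norm at h1
  match hl : w.toWord with
  | [] => rw [hl] at e; simp at e
  | [a] => rw [hl] at e; exact ⟨a, by simpa using e⟩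
  | a :: b :: l => rw [hl] at h1; simp at h1

lemma not_min {u v : F2} (h : Min u v) : False := by
  obtain ⟨a, ha⟩ := gen_letter h 0
  obtain ⟨b, hb⟩ := gen_letter h 1
  rcases two_cases a b with h1 | h1 | h1
  · rw [h1, ← hb] at ha
    revert ha; decide
  · rw [h1, E_bar, ← hb] at ha
    revert ha; decide
  · have := h.E a b h1
    rw [← ha, ← hb] at this
    exact this.1.2 (Or.inl (IsConj.refl _))

lemma not_bad (n : ℕ) : ∀ u v : F2, FreeGroup.norm u + FreeGroup.norm v = n → ¬ Bad u v := by
  induction n using Nat.strong_induction_on with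
  | _ n ih =>
    intro u v hn hb
    refine not_min (u := u) (v := v) ⟨hb, fun u' v' hb' => ?_⟩
    by_contra hc
    exact ih _ (by omega) u' v' rfl hb'

lemma main (α : F2 ≃* F2) : Q (α X) (α Y) := by
  by_contra hq
  refine not_bad _ (α X) (α Y) rfl ⟨?_, hq⟩
  have : Subgroup.closure {α X, α Y} = ⊤ := by
    have ht : Subgroup.closure {X, Y} = ⊤ := top_of ⟨mem1 _ _, mem2 _ _⟩
    have := congrArg (Subgroup.map α.toMonoidHom) ht
    rw [MonoidHom.map_closure, Set.image_pair, Subgroup.map_top_of_surjective _ α.surjective] at this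
    simpa using this
  simp [this]

end NielsenAux

/-- if generating pairs `(h1,h2)` and `(h1',h2')` of `H` are Nielsen
equivalent, then `[h1',h2']` is conjugate to `[h1,h2]` or to `[h2,h1]`. -/
theorem stmt7 (H : Type*) [Group H] (h1 h2 h1' h2' : H)
    (hgen : Subgroup.closure {h1, h2} = ⊤) (hgen' : Subgroup.closure {h1', h2'} = ⊤)
    (hne : NielsenEquiv (h1, h2) (h1', h2')) :
    ∃ g : H, commE h1' h2' = g⁻¹ * commE h1 h2 * g ∨ commE h1' h2' = g⁻¹ * commE h2 h1 * g := by
  obtain ⟨α, hα⟩ := hne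
  have x1 : eta (h1, h2) NielsenAux.X = h1 := by simp [eta, NielsenAux.X]
  have y1 : eta (h1, h2) NielsenAux.Y = h2 := by simp [eta, NielsenAux.Y]
  have x2 : h1' = eta (h1, h2) (α NielsenAux.X) := by
    have := DFunLike.congr_fun hα NielsenAux.X
    simpa [eta, NielsenAux.X] using this
  have y2 : h2' = eta (h1, h2) (α NielsenAux.Y) := by
    have := DFunLike.congr_fun hα NielsenAux.Y
    simpa [eta, NielsenAux.Y] using this
  have hc : ∀ a b, eta (h1, h2) (commE a b) = commE (eta (h1, h2) a) (eta (h1, h2) b) := by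
    intro a b; simp [commE]
  rcases NielsenAux.main α with h | h
  · obtain ⟨c, hcc⟩ := isConj_iff.1 h
    refine ⟨(eta (h1, h2) c)⁻¹, Or.inl ?_⟩
    have := congrArg (eta (h1, h2)) hcc
    rw [map_mul, map_mul, map_inv, hc, hc, x1, y1, ← x2, ← y2] at this
    rw [← this, inv_inv]
  · obtain ⟨c, hcc⟩ := isConj_iff.1 h
    refine ⟨(eta (h1, h2) c)⁻¹, Or.inr ?_⟩
    have := congrArg (eta (h1, h2)) hcc
    rw [map_mul, map_mul, map_inv, hc, hc, x1, y1, ← x2, ← y2] at this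
    rw [← this, inv_inv]
end

section
/- Let q be a prime power and let A, B, A', B' ∈ SL(2,F_q) be such that the images (Ā,B̄) and (Ā',B̄') in PSL(2,q) are generating pairs of PSL(2,q) that are Nielsen equivalent. Then tr([A,B]) = tr([A',B']). -/
/-- The canonical projection `SL(2,F) → PSL(2,F)`. -/
def proj (F : Type) [Field F] : SL2 F →* PSL2 F := QuotientGroup.mk' (Subgroup.center (SL2 F))

open MvPolynomial in
/-- evaluation at the traces -/
noncomputable def trEv {R : Type} [CommRing R] (A B : Matrix (Fin 2) (Fin 2) R) :
    MvPolynomial (Fin 3) ℤ →ₐ[ℤ] R :=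
  MvPolynomial.aeval ![A.trace, B.trace, (A * B).trace]

/-- the combination `f0 + f1 A + f2 B + f3 AB` -/
def comb4 {R : Type} [CommRing R] (A B : Matrix (Fin 2) (Fin 2) R) (w0 w1 w2 w3 : R) :
    Matrix (Fin 2) (Fin 2) R :=
  w0 • 1 + w1 • A + w2 • B + w3 • (A * B)

abbrev rho {R : Type} [CommRing R] (A B : Matrix.SpecialLinearGroup (Fin 2) R) :
    FreeGroup (Fin 2) →* Matrix.SpecialLinearGroup (Fin 2) R := FreeGroup.lift ![A, B]

def GoodW (w : FreeGroup (Fin 2)) : Prop :=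
  ∃ f0 f1 f2 f3 : MvPolynomial (Fin 3) ℤ, ∀ (R : Type) [CommRing R]
    (A B : Matrix.SpecialLinearGroup (Fin 2) R),
    ((rho A B w : Matrix.SpecialLinearGroup (Fin 2) R) : Matrix (Fin 2) (Fin 2) R)
      = comb4 A.1 B.1 (trEv A.1 B.1 f0) (trEv A.1 B.1 f1) (trEv A.1 B.1 f2) (trEv A.1 B.1 f3)

lemma trEv_X0 {R : Type} [CommRing R] (A B : Matrix (Fin 2) (Fin 2) R) :
    trEv A B (MvPolynomial.X 0) = A.trace := by simp [trEv]
lemma trEv_X1 {R : Type} [CommRing R] (A B : Matrix (Fin 2) (Fin 2) R) :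
    trEv A B (MvPolynomial.X 1) = B.trace := by simp [trEv]
lemma trEv_X2 {R : Type} [CommRing R] (A B : Matrix (Fin 2) (Fin 2) R) :
    trEv A B (MvPolynomial.X 2) = (A * B).trace := by simp [trEv]

lemma comb4_mul_A {R : Type} [CommRing R] (A B : Matrix (Fin 2) (Fin 2) R)
    (hA : A.det = 1) (hB : B.det = 1) (w0 w1 w2 w3 : R) :
    comb4 A B w0 w1 w2 w3 * A = comb4 A B
      (-w1 + w2 * ((A * B).trace - A.trace * B.trace) - w3 * B.trace)
      (w0 + w1 * A.trace + w2 * B.trace + w3 * (A * B).trace)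
      (w2 * A.trace + w3) (- w2) := by
  rw [Matrix.det_fin_two] at hA hB
  ext i j
  fin_cases i <;> fin_cases j <;>
    simp [comb4, Matrix.mul_apply, Fin.sum_univ_two, Matrix.trace_fin_two] <;> grind

lemma comb4_mul_B {R : Type} [CommRing R] (A B : Matrix (Fin 2) (Fin 2) R)
    (hA : A.det = 1) (hB : B.det = 1) (w0 w1 w2 w3 : R) :
    comb4 A B w0 w1 w2 w3 * B = comb4 A B
      (-w2) (-w3) (w0 + w2 * B.trace) (w1 + w3 * B.trace) := by
  rw [Matrix.det_fin_two] at hA hB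
  ext i j
  fin_cases i <;> fin_cases j <;>
    simp [comb4, Matrix.mul_apply, Fin.sum_univ_two, Matrix.trace_fin_two] <;> grind

lemma sl2_inv {R : Type} [CommRing R] (A : Matrix.SpecialLinearGroup (Fin 2) R) :
    (A⁻¹).1 = A.1.trace • 1 - A.1 := by
  ext i j
  rw [Matrix.SpecialLinearGroup.coe_inv, Matrix.adjugate_fin_two]
  fin_cases i <;> fin_cases j <;> simp [Matrix.trace_fin_two]

lemma good_mul_A (v : FreeGroup (Fin 2)) (h : GoodW v) : GoodW (v * FreeGroup.of 0) := by
  obtain ⟨f0, f1, f2, f3, h⟩ := h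
  refine ⟨-f1 + f2 * (MvPolynomial.X 2 - MvPolynomial.X 0 * MvPolynomial.X 1) -
    f3 * MvPolynomial.X 1, f0 + f1 * MvPolynomial.X 0 + f2 * MvPolynomial.X 1
      + f3 * MvPolynomial.X 2, f2 * MvPolynomial.X 0 + f3, -f2, fun R _ A B => ?_⟩
  have e : (rho A B (v * FreeGroup.of 0)).1 = (rho A B v).1 * A.1 := by simp [rho]
  rw [e, h R A B, comb4_mul_A _ _ A.2 B.2]
  simp [trEv_X0, trEv_X1, trEv_X2]

lemma good_mul_B (v : FreeGroup (Fin 2)) (h : GoodW v) : GoodW (v * FreeGroup.of 1) := by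
  obtain ⟨f0, f1, f2, f3, h⟩ := h
  refine ⟨-f2, -f3, f0 + f2 * MvPolynomial.X 1, f1 + f3 * MvPolynomial.X 1, fun R _ A B => ?_⟩
  have e : (rho A B (v * FreeGroup.of 1)).1 = (rho A B v).1 * B.1 := by simp [rho]
  rw [e, h R A B, comb4_mul_B _ _ A.2 B.2]
  simp [trEv_X0, trEv_X1, trEv_X2]

lemma comb4_inv {R : Type} [CommRing R] (A B : Matrix (Fin 2) (Fin 2) R)
    (t w0 w1 w2 w3 v0 v1 v2 v3 : R) :
    t • comb4 A B w0 w1 w2 w3 - comb4 A B v0 v1 v2 v3 =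
      comb4 A B (w0 * t - v0) (w1 * t - v1) (w2 * t - v2) (w3 * t - v3) := by
  simp only [comb4]; module

lemma good_mul_inv (i : Fin 2) (t : MvPolynomial (Fin 3) ℤ)
    (ht : ∀ (R : Type) [CommRing R] (A B : Matrix.SpecialLinearGroup (Fin 2) R),
      trEv A.1 B.1 t = (rho A B (FreeGroup.of i)).1.trace)
    (v : FreeGroup (Fin 2)) (h : GoodW v) (h' : GoodW (v * FreeGroup.of i)) :
    GoodW (v * (FreeGroup.of i)⁻¹) := by
  obtain ⟨f0, f1, f2, f3, h⟩ := h
  obtain ⟨g0, g1, g2, g3, h'⟩ := h'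
  refine ⟨f0 * t - g0, f1 * t - g1, f2 * t - g2, f3 * t - g3, fun R _ A B => ?_⟩
  have e : (rho A B (v * (FreeGroup.of i)⁻¹)).1 =
      (rho A B (FreeGroup.of i)).1.trace • (rho A B v).1 - (rho A B (v * FreeGroup.of i)).1 := by
    rw [map_mul, map_inv, map_mul, Matrix.SpecialLinearGroup.coe_mul, sl2_inv,
      Matrix.SpecialLinearGroup.coe_mul]
    simp [mul_sub]
  rw [e, h R A B, h' R A B, comb4_inv]
  simp [ht]

lemma good_all (w : FreeGroup (Fin 2)) : GoodW w := by
  have key : ∀ w : FreeGroup (Fin 2), ∀ v, GoodW v → GoodW (v * w) := by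
    intro w
    have hof : ∀ i : Fin 2, ∀ v, GoodW v → GoodW (v * FreeGroup.of i) := by
      intro i v hv
      fin_cases i
      · exact good_mul_A v hv
      · exact good_mul_B v hv
    induction w using FreeGroup.induction_on with
    | C1 => intro v hv; simpa using hv
    | of i => exact hof i
    | inv_of i _ =>
      intro v hv
      fin_cases i
      · exact good_mul_inv 0 (MvPolynomial.X 0) (fun R _ A B => by simp [trEv_X0]) v hv (hof 0 v hv)
      · exact good_mul_inv 1 (MvPolynomial.X 1) (fun R _ A B => by simp [trEv_X1]) v hv (hof 1 v hv)
    | mul x y hx hy =>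
      intro v hv
      rw [← mul_assoc]
      exact hy _ (hx v hv)
  have h1 : GoodW 1 := ⟨1, 0, 0, 0, fun R _ A B => by simp [comb4]⟩
  simpa using key w 1 h1

lemma tr_poly (w : FreeGroup (Fin 2)) : ∃ p : MvPolynomial (Fin 3) ℤ, ∀ (R : Type) [CommRing R]
    (A B : Matrix.SpecialLinearGroup (Fin 2) R), (rho A B w).1.trace = trEv A.1 B.1 p := by
  obtain ⟨f0, f1, f2, f3, h⟩ := good_all w
  refine ⟨2 * f0 + f1 * MvPolynomial.X 0 + f2 * MvPolynomial.X 1 + f3 * MvPolynomial.X 2,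
    fun R _ A B => ?_⟩
  rw [h R A B]
  simp [comb4, trEv_X0, trEv_X1, trEv_X2, map_ofNat (trEv A.1 B.1) 2]
  ring

/-- 2 minus the trace of the commutator -/
def del {R : Type} [CommRing R] (A B : Matrix.SpecialLinearGroup (Fin 2) R) : R :=
  2 - (A⁻¹ * B⁻¹ * A * B).1.trace

lemma del_eq_det {R : Type} [CommRing R] (A B : Matrix.SpecialLinearGroup (Fin 2) R) :
    del A B = (A.1 * B.1 - B.1 * A.1).det := by
  have h1 : A.1 * B.1 - B.1 * A.1 = (B * A).1 * ((A⁻¹ * B⁻¹ * A * B).1 - 1) := by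
    rw [mul_sub, ← Matrix.SpecialLinearGroup.coe_mul, ← Matrix.SpecialLinearGroup.coe_mul]
    have e : B * A * (A⁻¹ * B⁻¹ * A * B) = A * B := by group
    have e2 := congrArg Subtype.val e
    rw [Matrix.SpecialLinearGroup.coe_mul] at e2
    rw [e2, mul_one]
  rw [h1, Matrix.det_mul, (B * A).2, one_mul, del]
  have := (A⁻¹ * B⁻¹ * A * B).2
  generalize (A⁻¹ * B⁻¹ * A * B).1 = M at *
  rw [Matrix.det_fin_two] at this
  simp [Matrix.det_fin_two, Matrix.trace_fin_two]
  linear_combination -this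

lemma comm_comb {R : Type} [CommRing R] (A B : Matrix (Fin 2) (Fin 2) R)
    (u0 u1 u2 u3 v0 v1 v2 v3 : R) :
    comb4 A B u0 u1 u2 u3 * comb4 A B v0 v1 v2 v3 - comb4 A B v0 v1 v2 v3 * comb4 A B u0 u1 u2 u3
      = ((u1 * v2 - u2 * v1) • 1 + (u1 * v3 - u3 * v1) • A - (u2 * v3 - u3 * v2) • B.adjugate) *
        (A * B - B * A) := by
  rw [Matrix.adjugate_fin_two]
  ext i j
  fin_cases i <;> fin_cases j <;>
    simp [comb4, Matrix.mul_apply, Fin.sum_univ_two] <;> ring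

lemma det_lin {R : Type} [CommRing R] (A B : Matrix (Fin 2) (Fin 2) R)
    (hA : A.det = 1) (hB : B.det = 1) (a b c : R) :
    (a • 1 + b • A - c • B.adjugate).det =
      a ^ 2 + b ^ 2 + c ^ 2 + a * b * A.trace - a * c * B.trace - b * c * (A * B).trace := by
  rw [Matrix.det_fin_two] at hA hB
  rw [Matrix.adjugate_fin_two, Matrix.det_fin_two]
  simp [Matrix.mul_apply, Fin.sum_univ_two, Matrix.trace_fin_two]
  linear_combination b ^ 2 * hA + c ^ 2 * hB

lemma del_poly (u v : FreeGroup (Fin 2)) : ∃ k : MvPolynomial (Fin 3) ℤ, ∀ (R : Type) [CommRing R]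
    (A B : Matrix.SpecialLinearGroup (Fin 2) R),
    del (rho A B u) (rho A B v) = trEv A.1 B.1 k * del A B := by
  obtain ⟨f0, f1, f2, f3, hu⟩ := good_all u
  obtain ⟨g0, g1, g2, g3, hv⟩ := good_all v
  refine ⟨(f1 * g2 - f2 * g1) ^ 2 + (f1 * g3 - f3 * g1) ^ 2 + (f2 * g3 - f3 * g2) ^ 2
    + (f1 * g2 - f2 * g1) * (f1 * g3 - f3 * g1) * MvPolynomial.X 0
    - (f1 * g2 - f2 * g1) * (f2 * g3 - f3 * g2) * MvPolynomial.X 1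
    - (f1 * g3 - f3 * g1) * (f2 * g3 - f3 * g2) * MvPolynomial.X 2, fun R _ A B => ?_⟩
  rw [del_eq_det, del_eq_det, hu R A B, hv R A B, comm_comb, Matrix.det_mul,
    det_lin _ _ A.2 B.2]
  simp [trEv_X0, trEv_X1, trEv_X2]

noncomputable def delP : MvPolynomial (Fin 3) ℤ :=
  4 - MvPolynomial.X 0 ^ 2 - MvPolynomial.X 1 ^ 2 - MvPolynomial.X 2 ^ 2
    + MvPolynomial.X 0 * MvPolynomial.X 1 * MvPolynomial.X 2

lemma del_eq_delP {R : Type} [CommRing R] (A B : Matrix.SpecialLinearGroup (Fin 2) R) :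
    del A B = trEv A.1 B.1 delP := by
  have hA := A.2
  have hB := B.2
  rw [del_eq_det]
  simp only [delP, map_add, map_sub, map_mul, map_pow, trEv_X0, trEv_X1, trEv_X2, map_ofNat]
  generalize A.1 = A at *
  generalize B.1 = B at *
  rw [Matrix.det_fin_two] at hA hB
  simp [Matrix.det_fin_two, Matrix.mul_apply, Fin.sum_univ_two, Matrix.trace_fin_two]
  grind

lemma delP_ne : delP ≠ 0 := by
  intro h
  have := congrArg (MvPolynomial.aeval (fun _ => (0:ℤ))) h
  simp only [delP, map_add, map_sub, map_mul, map_pow, map_ofNat, MvPolynomial.aeval_X,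
    map_zero] at this
  norm_num at this

lemma exists_AB (t : Fin 3 → ℂ) : ∃ A B : Matrix.SpecialLinearGroup (Fin 2) ℂ,
    trEv A.1 B.1 = MvPolynomial.aeval t := by
  obtain ⟨s, hs⟩ := IsAlgClosed.exists_pow_nat_eq (t 2 ^ 2 - 4) (n := 2) (by norm_num)
  have hc : ((t 2 + s) / 2) * ((t 2 - s) / 2) = 1 := by linear_combination (-1/4) * hs
  refine ⟨⟨!![t 0, -1; 1, 0], by simp [Matrix.det_fin_two]⟩,
    ⟨!![0, (t 2 + s) / 2; -((t 2 - s) / 2), t 1], by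
      rw [Matrix.det_fin_two]; simp; linear_combination hc⟩, ?_⟩
  unfold trEv
  congr 1
  funext i
  fin_cases i
  · simp [Matrix.trace_fin_two]
  · simp [Matrix.trace_fin_two]
  · simp [Matrix.trace_fin_two, Matrix.mul_apply, Fin.sum_univ_two]
    ring

lemma poly_ext (p q : MvPolynomial (Fin 3) ℤ)
    (h : ∀ A B : Matrix.SpecialLinearGroup (Fin 2) ℂ, trEv A.1 B.1 p = trEv A.1 B.1 q) : p = q := by
  apply MvPolynomial.map_injective (Int.castRingHom ℂ) (RingHom.injective_int _)
  apply MvPolynomial.funext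
  intro t
  obtain ⟨A, B, hAB⟩ := exists_AB t
  have := h A B
  rw [hAB] at this
  rw [MvPolynomial.eval_map, MvPolynomial.eval_map]
  simpa [MvPolynomial.aeval_def] using this

lemma unit_pm (k l : MvPolynomial (Fin 3) ℤ) (h : k * l = 1) : k = 1 ∨ k = -1 := by
  have hu : IsUnit k := IsUnit.of_mul_eq_one _ h
  rw [MvPolynomial.isUnit_iff_eq_C_of_isReduced] at hu
  obtain ⟨r, hr, rfl⟩ := hu
  rcases Int.isUnit_iff.1 hr with rfl | rfl
  · left; simp
  · right; simp

lemma su_trace (w : FreeGroup (Fin 2)) (A B : Matrix.SpecialLinearGroup (Fin 2) ℂ)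
    (hA : A.1 ∈ Matrix.unitaryGroup (Fin 2) ℂ) (hB : B.1 ∈ Matrix.unitaryGroup (Fin 2) ℂ) :
    (rho A B w).1 ∈ Matrix.unitaryGroup (Fin 2) ℂ := by
  have hinv : ∀ M : Matrix.SpecialLinearGroup (Fin 2) ℂ, M.1 ∈ Matrix.unitaryGroup (Fin 2) ℂ →
      (M⁻¹).1 ∈ Matrix.unitaryGroup (Fin 2) ℂ := by
    intro M hM
    have h1 : star M.1 * M.1 = 1 := Matrix.mem_unitaryGroup_iff'.1 hM
    have h2 : M.1 * (M⁻¹).1 = 1 := by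
      rw [← Matrix.SpecialLinearGroup.coe_mul]; simp
    have : (M⁻¹).1 = star M.1 := (left_inv_eq_right_inv h1 h2).symm
    rw [this]
    exact Unitary.star_mem hM
  have hof : ∀ i, (rho A B (FreeGroup.of i)).1 ∈ Matrix.unitaryGroup (Fin 2) ℂ := by
    intro i
    fin_cases i
    · simpa using hA
    · simpa using hB
  induction w using FreeGroup.induction_on with
  | C1 => simp
  | of i => exact hof i
  | inv_of i _ => rw [map_inv]; exact hinv _ (hof i)
  | mul x y hx hy => rw [map_mul, Matrix.SpecialLinearGroup.coe_mul]; exact mul_mem hx hy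

lemma rho_comp {R : Type} [CommRing R] (A B : Matrix.SpecialLinearGroup (Fin 2) R)
    (α : FreeGroup (Fin 2) ≃* FreeGroup (Fin 2)) (w : FreeGroup (Fin 2)) :
    rho (rho A B (α (FreeGroup.of 0))) (rho A B (α (FreeGroup.of 1))) w = rho A B (α w) := by
  have : rho (rho A B (α (FreeGroup.of 0))) (rho A B (α (FreeGroup.of 1))) =
      (rho A B).comp α.toMonoidHom := by
    ext i : 1
    fin_cases i <;> simp
  rw [this]; rfl

lemma del_aut {R : Type} [CommRing R] (A B : Matrix.SpecialLinearGroup (Fin 2) R)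
    (α : FreeGroup (Fin 2) ≃* FreeGroup (Fin 2)) :
    del (rho A B (α (FreeGroup.of 0))) (rho A B (α (FreeGroup.of 1))) = del A B := by
  obtain ⟨k, hk⟩ := del_poly (α (FreeGroup.of 0)) (α (FreeGroup.of 1))
  obtain ⟨l, hl⟩ := del_poly (α.symm (FreeGroup.of 0)) (α.symm (FreeGroup.of 1))
  obtain ⟨p, hp⟩ := tr_poly (α (FreeGroup.of 0))
  obtain ⟨q, hq⟩ := tr_poly (α (FreeGroup.of 1))
  obtain ⟨r, hr⟩ := tr_poly (α (FreeGroup.of 0) * α (FreeGroup.of 1))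
  have hkl : k * MvPolynomial.bind₁ ![p, q, r] l = 1 := by
    have h1 : k * MvPolynomial.bind₁ ![p, q, r] l * delP = 1 * delP := by
      apply poly_ext
      intro A B
      rw [map_mul, map_mul, map_mul, map_one, one_mul, ← del_eq_delP]
      have h2 := hl ℂ (rho A B (α (FreeGroup.of 0))) (rho A B (α (FreeGroup.of 1)))
      rw [rho_comp, rho_comp, hk] at h2
      simp only [MulEquiv.apply_symm_apply] at h2
      have h3 : trEv (rho A B (α (FreeGroup.of 0))).1 (rho A B (α (FreeGroup.of 1))).1 l =
          trEv A.1 B.1 (MvPolynomial.bind₁ ![p, q, r] l) := by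
        have h4 := hr ℂ A B
        rw [map_mul, Matrix.SpecialLinearGroup.coe_mul] at h4
        conv_rhs => unfold trEv
        rw [MvPolynomial.aeval_bind₁]
        conv_lhs => unfold trEv
        congr 1
        congr 1
        funext i
        fin_cases i
        · simpa [trEv] using hp ℂ A B
        · simpa [trEv] using hq ℂ A B
        · simpa [trEv] using h4
      rw [h3] at h2
      simp only [FreeGroup.lift_apply_of, Matrix.cons_val_zero, Matrix.cons_val_one] at h2
      linear_combination -h2
    exact mul_right_cancel₀ delP_ne h1
  rcases unit_pm _ _ hkl with rfl | rfl
  · rw [hk]; simp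
  · exfalso
    let A : Matrix.SpecialLinearGroup (Fin 2) ℂ := ⟨!![0, -1; 1, 0], by simp [Matrix.det_fin_two]⟩
    let B : Matrix.SpecialLinearGroup (Fin 2) ℂ :=
      ⟨!![Complex.I, 0; 0, -Complex.I], by simp [Matrix.det_fin_two]⟩
    have hA : A.1 ∈ Matrix.unitaryGroup (Fin 2) ℂ := by
      rw [Matrix.mem_unitaryGroup_iff]
      ext i j
      fin_cases i <;> fin_cases j <;> simp [A, Matrix.mul_apply, Fin.sum_univ_two, Matrix.star_apply]
    have hB : B.1 ∈ Matrix.unitaryGroup (Fin 2) ℂ := by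
      rw [Matrix.mem_unitaryGroup_iff]
      ext i j
      fin_cases i <;> fin_cases j <;> simp [B, Matrix.mul_apply, Fin.sum_univ_two, Matrix.star_apply]
    have h := hk ℂ A B
    have hd : del A B = 4 := by
      rw [del_eq_delP]
      simp only [delP, map_add, map_sub, map_mul, map_pow, trEv_X0, trEv_X1, trEv_X2, map_ofNat]
      simp [A, B, Matrix.trace_fin_two]
    rw [hd] at h
    simp only [map_neg, map_one] at h
    unfold del at h
    have hM := su_trace ((α (FreeGroup.of 0))⁻¹ * (α (FreeGroup.of 1))⁻¹ * α (FreeGroup.of 0) *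
      α (FreeGroup.of 1)) A B hA hB
    rw [map_mul, map_mul, map_mul, map_inv, map_inv] at hM
    have e0 := entry_norm_bound_of_unitary hM 0 0
    have e1 := entry_norm_bound_of_unitary hM 1 1
    rw [Matrix.trace_fin_two] at h
    generalize Subtype.val (_ * rho A B (α (FreeGroup.of 1)) : Matrix.SpecialLinearGroup (Fin 2) ℂ) = M at h e0 e1
    have h5 : M 0 0 + M 1 1 = 6 := by linear_combination -h
    have h6 := norm_add_le (M 0 0) (M 1 1)
    rw [h5] at h6
    norm_num at h6
    linarith

lemma comm_center {G : Type*} [Group G] (a b a' b' : G)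
    (ha : a⁻¹ * a' ∈ Subgroup.center G) (hb : b⁻¹ * b' ∈ Subgroup.center G) :
    a'⁻¹ * b'⁻¹ * a' * b' = a⁻¹ * b⁻¹ * a * b := by
  obtain ⟨z, hz⟩ : ∃ z, z = a⁻¹ * a' := ⟨_, rfl⟩
  obtain ⟨y, hy⟩ : ∃ y, y = b⁻¹ * b' := ⟨_, rfl⟩
  rw [← hz, Subgroup.mem_center_iff] at ha
  rw [← hy, Subgroup.mem_center_iff] at hb
  obtain rfl : a' = a * z := by rw [hz]; group
  obtain rfl : b' = b * y := by rw [hy]; group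
  calc (a * z)⁻¹ * (b * y)⁻¹ * (a * z) * (b * y)
      = z⁻¹ * a⁻¹ * y⁻¹ * b⁻¹ * a * (z * (b * y)) := by group
    _ = z⁻¹ * a⁻¹ * y⁻¹ * b⁻¹ * a * (b * y * z) := by rw [ha]
    _ = z⁻¹ * (a⁻¹ * y⁻¹ * b⁻¹ * a * b * y * z) := by group
    _ = z⁻¹ * (z * (a⁻¹ * y⁻¹ * b⁻¹ * a * b * y)) := by
        rw [← ha (a⁻¹ * y⁻¹ * b⁻¹ * a * b * y)]
    _ = a⁻¹ * y⁻¹ * (b⁻¹ * a * b * y) := by group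
    _ = a⁻¹ * y⁻¹ * (y * (b⁻¹ * a * b)) := by rw [hb]
    _ = a⁻¹ * b⁻¹ * a * b := by group

/-- if `A, B, A', B' ∈ SL(2,F_q)` are such that the images `(Ā, B̄)` and
`(Ā', B̄')` in `PSL(2,q)` are Nielsen equivalent generating pairs of `PSL(2,q)`, then
`tr([A,B]) = tr([A',B'])`. -/
theorem stmt8 (q : ℕ) (F : Type) [Field F] [Fintype F] (hcard : Fintype.card F = q)
    (A B A' B' : SL2 F)
    (hgen : Subgroup.closure {proj F A, proj F B} = ⊤)
    (hgen' : Subgroup.closure {proj F A', proj F B'} = ⊤)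
    (hne : NielsenEquiv (proj F A, proj F B) (proj F A', proj F B')) :
    Matrix.trace ((A⁻¹ * B⁻¹ * A * B : SL2 F) : Matrix (Fin 2) (Fin 2) F) =
      Matrix.trace ((A'⁻¹ * B'⁻¹ * A' * B' : SL2 F) : Matrix (Fin 2) (Fin 2) F) := by
  obtain ⟨α, hα⟩ := hne
  have hpe : ∀ w, eta (proj F A, proj F B) w = proj F (rho A B w) := by
    intro w
    have : eta (proj F A, proj F B) = (proj F).comp (rho A B) := by
      ext i : 1
      fin_cases i <;> simp [eta]
    rw [this]; rfl
  have h0 : proj F (rho A B (α (FreeGroup.of 0))) = proj F A' := by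
    have := DFunLike.congr_fun hα (FreeGroup.of 0)
    rw [MonoidHom.comp_apply, hpe] at this
    simpa [eta] using this.symm
  have h1 : proj F (rho A B (α (FreeGroup.of 1))) = proj F B' := by
    have := DFunLike.congr_fun hα (FreeGroup.of 1)
    rw [MonoidHom.comp_apply, hpe] at this
    simpa [eta] using this.symm
  have c0 := QuotientGroup.eq.1 h0
  have c1 := QuotientGroup.eq.1 h1
  rw [comm_center _ _ _ _ c0 c1]
  have := del_aut A B α
  unfold del at this
  exact (sub_right_injective this).symm
end

section
/- Let q be a prime power with q ≡ 3 (mod 4), and suppose A, B ∈ SL(2,F_q) generate SL(2,F_q) (i.e. ⟨A,B⟩ = SL(2,F_q)) and A⁴ = I. Then tr([A,B]) ≠ −2. -/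
theorem stmt10 (q : ℕ) (F : Type) [Field F] [Fintype F] (hcard : Fintype.card F = q)
    (hq : q % 4 = 3) (A B : SL2 F)
    (hgen : Subgroup.closure {A, B} = ⊤) (hA : A ^ 4 = 1) :
    Matrix.trace ((A⁻¹ * B⁻¹ * A * B : SL2 F) : Matrix (Fin 2) (Fin 2) F) ≠ -2 := by
  intro htr
  have hns : ¬ IsSquare (-1 : F) := by
    rw [FiniteField.isSquare_neg_one_iff, hcard]
    omega
  have h2 : (2 : F) ≠ 0 := by
    intro h
    apply hns
    refine ⟨1, ?_⟩
    linear_combination -h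
  have hsum : ∀ y z : F, y ^ 2 + z ^ 2 = 0 → y = 0 ∧ z = 0 := by
    intro y z h
    have hz : z = 0 := by
      by_contra hz
      apply hns
      refine ⟨y / z, ?_⟩
      field_simp
      linear_combination -h
    refine ⟨?_, hz⟩
    subst hz
    simpa using h
  obtain ⟨a, ha⟩ : ∃ a, a = A.1 0 0 := ⟨_, rfl⟩
  obtain ⟨b, hb⟩ : ∃ a, a = A.1 0 1 := ⟨_, rfl⟩
  obtain ⟨c, hc⟩ : ∃ a, a = A.1 1 0 := ⟨_, rfl⟩
  obtain ⟨d, hd⟩ : ∃ a, a = A.1 1 1 := ⟨_, rfl⟩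
  obtain ⟨e, he⟩ : ∃ a, a = B.1 0 0 := ⟨_, rfl⟩
  obtain ⟨f, hf⟩ : ∃ a, a = B.1 0 1 := ⟨_, rfl⟩
  obtain ⟨g, hg⟩ : ∃ a, a = B.1 1 0 := ⟨_, rfl⟩
  obtain ⟨k, hk⟩ : ∃ a, a = B.1 1 1 := ⟨_, rfl⟩
  have hAm : A.1 = !![a, b; c, d] := by
    rw [ha, hb, hc, hd]; exact Matrix.eta_fin_two _
  have hBm : B.1 = !![e, f; g, k] := by
    rw [he, hf, hg, hk]; exact Matrix.eta_fin_two _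
  have dA : a * d - b * c = 1 := by
    have := A.2; rwa [hAm, Matrix.det_fin_two_of] at this
  have dB : e * k - f * g = 1 := by
    have := B.2; rwa [hBm, Matrix.det_fin_two_of] at this
  have htr' : (a + d) ^ 2 + (e + k) ^ 2 + (a * e + b * g + c * f + d * k) ^ 2
      - (a + d) * (e + k) * (a * e + b * g + c * f + d * k) = 0 := by
    have h := htr
    simp only [Matrix.SpecialLinearGroup.coe_mul, Matrix.SpecialLinearGroup.coe_inv] at h
    change Matrix.trace (A.1.adjugate * B.1.adjugate * A.1 * B.1) = -2 at h
    rw [hAm, hBm] at h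
    simp [Matrix.trace_fin_two, Matrix.adjugate_fin_two_of] at h
    grind
  have hA4 : A.1 ^ 4 = 1 := by
    have := congrArg Subtype.val hA
    simpa using this
  have h22 : A.1 ^ 2 = (a + d) • A.1 - 1 := by
    rw [hAm, pow_two]
    ext i j
    fin_cases i <;> fin_cases j <;> simp <;> first | ring1 | linear_combination -dA
  have h4 : ((a+d)^3 - 2*(a+d)) • A.1 = (a+d)^2 • (1 : Matrix (Fin 2) (Fin 2) F) := by
    have h3 : A.1 ^ 4 = ((a + d) • A.1 - 1) * ((a + d) • A.1 - 1) := by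
      rw [← h22, ← pow_add]
    have h5 : ((a + d) • A.1 - 1) * ((a + d) • A.1 - 1)
        = (a+d)^2 • A.1 ^ 2 - (2 * (a+d)) • A.1 + 1 := by
      simp only [sub_mul, mul_sub, smul_mul_assoc, mul_smul_comm, one_mul, mul_one]
      rw [pow_two A.1]; module
    rw [hA4, h5, h22] at h3
    have h6 := sub_eq_zero.mpr h3
    rw [← sub_eq_zero, ← neg_eq_zero.mpr h6]
    module
  have t0 : a + d = 0 := by
    by_contra ht
    rw [hAm] at h4
    have e00 := congrFun (congrFun h4 0) 0
    have e01 := congrFun (congrFun h4 0) 1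
    have e10 := congrFun (congrFun h4 1) 0
    have e11 := congrFun (congrFun h4 1) 1
    simp only [Matrix.smul_apply, Matrix.of_apply, Matrix.cons_val', Matrix.cons_val_zero,
      Matrix.cons_val_one, smul_eq_mul, Matrix.one_apply_eq, ne_eq, zero_ne_one, one_ne_zero,
      not_false_eq_true, Matrix.one_apply_ne, mul_zero, mul_one] at e00 e01 e10 e11
    have hs : (a+d)^3 - 2*(a+d) ≠ 0 := by
      intro h
      rw [h, zero_mul] at e00
      exact ht (pow_eq_zero_iff (two_ne_zero) |>.mp e00.symm)
    have b0 : b = 0 := (mul_eq_zero.mp e01).resolve_left hs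
    have c0 : c = 0 := (mul_eq_zero.mp e10).resolve_left hs
    have ad : a = d := mul_left_cancel₀ hs (e00.trans e11.symm)
    subst b0 c0 ad
    have : (2:F) * 2 = 0 := by
      linear_combination htr' - (4 + (e+k)^2 - 2*(e+k)^2)*dA
    simp [h2] at this
  rw [t0] at htr'
  obtain ⟨y0, z0⟩ := hsum (e + k) (a * e + b * g + c * f + d * k) (by linear_combination htr')
  have hd' : d = -a := by linear_combination t0
  have hk' : k = -e := by linear_combination y0
  have hBA : B.1 * A.1 = -(A.1 * B.1) := by
    rw [hAm, hBm]
    subst hd' hk'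
    ext i j
    fin_cases i <;> fin_cases j <;> simp <;> first | ring1 | linear_combination z0
  have key : ∀ X : SL2 F, X.1 * A.1 = A.1 * X.1 ∨ X.1 * A.1 = -(A.1 * X.1) := by
    intro X
    have hX : X ∈ Subgroup.closure {A, B} := by rw [hgen]; trivial
    induction hX using Subgroup.closure_induction with
    | mem x hx =>
      rcases hx with rfl | rfl
      · left; rfl
      · right; exact hBA
    | one => left; simp
    | mul x y _ _ hx hy =>
      have : (x * y).1 = x.1 * y.1 := rfl
      rw [this, mul_assoc, ← mul_assoc A.1]
      rcases hx with hx | hx <;> rcases hy with hy | hy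
      · left; rw [hy, ← mul_assoc, hx]
      · right; rw [hy, mul_neg, ← mul_assoc, hx]
      · right; rw [hy, ← mul_assoc, hx, neg_mul]
      · left; rw [hy, mul_neg, ← mul_assoc, hx, neg_mul, neg_neg]
    | inv x _ hx =>
      have i1 : x.1 * (x⁻¹).1 = 1 := congrArg Subtype.val (mul_inv_cancel x)
      have i2 : (x⁻¹).1 * x.1 = 1 := congrArg Subtype.val (inv_mul_cancel x)
      have e1 : (x⁻¹).1 * (x.1 * A.1) * (x⁻¹).1 = A.1 * (x⁻¹).1 := by
        rw [← mul_assoc, i2, one_mul]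
      have e2 : (x⁻¹).1 * (A.1 * x.1) * (x⁻¹).1 = (x⁻¹).1 * A.1 := by
        rw [mul_assoc, mul_assoc, i1, mul_one]
      rcases hx with hx | hx
      · left; rw [← e1, ← e2, hx]
      · right; rw [← e1, hx, mul_neg, neg_mul, e2, neg_neg]
  have hT := key ⟨!![1, 1; 0, 1], by simp⟩
  rw [hAm] at hT
  have hac : a = 0 ∧ c = 0 := by
    rcases hT with h | h
    · have e00 := congrFun (congrFun h 0) 0
      have e01 := congrFun (congrFun h 0) 1
      simp at e00 e01
      refine ⟨?_, e00⟩
      have : 2 * a = 0 := by linear_combination t0 - e01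
      simpa [h2] using this
    · have e00 := congrFun (congrFun h 0) 0
      have e10 := congrFun (congrFun h 1) 0
      simp at e00 e10
      have c0 : c = 0 := by
        have : 2 * c = 0 := by linear_combination e10
        simpa [h2] using this
      refine ⟨?_, c0⟩
      have : 2 * a = 0 := by linear_combination e00 - c0
      simpa [h2] using this
  obtain ⟨rfl, rfl⟩ := hac
  simp at dA
end
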